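/- arXiv:2601.09554 — 4 statements merged into one kernel-verified Lean document; each statement's English description precedes it below -/
import Mathlib

section
/- Under the linear-mix model, the conditional mean of X given Y exists and is linear: for (μ.map Y)-almost every y ∈ ℝ, the identity function is integrable with respect to the conditional law condDistrib X Y μ y, and ∫ x d(condDistrib X Y μ y)(x) = κ·y, where κ = ((|a₂₁|γ_{Z₁})^α·(a₁₁/a₂₁) + (|a₂₂|γ_{Z₂})^α·(a₁₂/a₂₂)) / ((|a₂₁|γ_{Z₁})^α + (|a₂₂|γ_{Z₂})^α). -/
open MeasureTheory ProbabilityTheory Real Set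

/-!
Put `U = a₂₁ Z₁` and `V = a₂₂ Z₂`, so that `Y = U + V`, and `c = (|a₂₁| γ₁) ^ α`,
`c' = (|a₂₂| γ₂) ^ α`. The residual `X - κ Y` is a multiple of `c' U - c V`. For `α ≤ 1` neither `U`
nor `V` has a mean, so the residual is tested against the weighted characters
`exp (-Y ^ 2 / 2 + i τ Y)`. Such a weight is the characteristic function of `𝒩(τ, 1)` at `U + V`, so
Fubini and an integration by parts in the frequency variable `t` give, up to a constant,
`E[U exp (-Y ^ 2 / 2 + i τ Y)] = ∫ p t * φ_U' t * φ_V t`, where `p` is the density of `𝒩(τ, 1)`.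
(The same computation bounds the integral in `u` of `u exp (-(u + v) ^ 2 / 2)` uniformly in `v`,
which makes `U exp (-Y ^ 2 / 2)` integrable.) As `φ_U' / φ_U` and `φ_V' / φ_V` are in the ratio
`c : c'`, the weighted residual is orthogonal to every character of `Y`, hence has zero conditional
mean given `Y`; the weight is a nonvanishing function of `Y` and cancels.
-/

open Filter Topology

lemma integral_eq_zero_of_hasDerivAt_off_countable {E : Type*} [NormedAddCommGroup E]
    [NormedSpace ℝ E] [CompleteSpace E] {f f' : ℝ → E} {s : Set ℝ} (hs : s.Countable)
    (hf : Continuous f) (hd : ∀ t ∉ s, HasDerivAt f (f' t) t) (hf' : Integrable f')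
    (hbot : Tendsto f atBot (𝓝 0)) (htop : Tendsto f atTop (𝓝 0)) :
    ∫ t, f' t = 0 := by
  have hFTC (R : ℝ) : ∫ t in -R..R, f' t = f R - f (-R) :=
    integral_eq_of_hasDerivAt_off_countable f f' hs hf.continuousOn (fun t ht ↦ hd t ht.2)
      hf'.intervalIntegrable
  have hlim : Tendsto (fun R ↦ f R - f (-R)) atTop (𝓝 0) := by
    simpa using htop.sub (hbot.comp tendsto_neg_atTop_atBot)
  refine tendsto_nhds_unique (intervalIntegral_tendsto_integral hf' tendsto_neg_atTop_atBot
    tendsto_id) (hlim.congr fun R ↦ (hFTC R).symm)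

lemma integral_deriv_mul_eq_neg_integral_mul_deriv {A : Type*} [NormedRing A] [NormedAlgebra ℝ A]
    [CompleteSpace A] {g g' f f' : ℝ → A} {s : Set ℝ} {C : ℝ}
    (hg : ∀ t, HasDerivAt g (g' t) t) (hg_int : Integrable g) (hg'_int : Integrable g')
    (hs : s.Countable) (hf : Continuous f) (hf_bdd : ∀ t, ‖f t‖ ≤ C)
    (hd : ∀ t ∉ s, HasDerivAt f (f' t) t) (hgf' : Integrable fun t ↦ g t * f' t) :
    ∫ t, g' t * f t = -∫ t, g t * f' t := by
  have hg'f : Integrable fun t ↦ g' t * f t :=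
    hg'_int.mul_bdd hf.aestronglyMeasurable (.of_forall hf_bdd)
  have hg_cont : Continuous g := continuous_iff_continuousAt.2 fun t ↦ (hg t).continuousAt
  have hlim {l : Filter ℝ} (hgl : Tendsto g l (𝓝 0)) : Tendsto (fun t ↦ g t * f t) l (𝓝 0) :=
    hgl.zero_mul_isBoundedUnder_le ⟨C, eventually_map.2 (.of_forall hf_bdd)⟩
  rw [eq_neg_iff_add_eq_zero, ← integral_add hg'f hgf']
  exact integral_eq_zero_of_hasDerivAt_off_countable hs (hg_cont.mul hf)
    (fun t ht ↦ (hg t).mul (hd t ht)) (hg'f.add hgf')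
    (hlim (tendsto_zero_of_hasDerivAt_of_integrableOn_Iic (a := 0) (fun t _ ↦ hg t)
      hg'_int.integrableOn hg_int.integrableOn))
    (hlim (tendsto_zero_of_hasDerivAt_of_integrableOn_Ioi (a := 0) (fun t _ ↦ hg t)
      hg'_int.integrableOn hg_int.integrableOn))

lemma norm_cexp_mul_mul_I (t u : ℝ) : ‖Complex.exp (t * u * Complex.I)‖ = 1 := by
  rw [← Complex.ofReal_mul, Complex.norm_exp_ofReal_mul_I]

lemma hasDerivAt_cexp_mul_mul_I (u t : ℝ) :
    HasDerivAt (fun t : ℝ ↦ Complex.exp (t * u * Complex.I))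
      (Complex.exp (t * u * Complex.I) * (u * Complex.I)) t := by
  simpa using ((Complex.ofRealCLM.hasDerivAt (x := t)).mul_const (u : ℂ)
    |>.mul_const Complex.I).cexp

lemma integrable_mul_cexp {P : Measure ℝ} {g : ℝ → ℂ} (hg : Integrable g P) (u : ℝ) :
    Integrable (fun t : ℝ ↦ g t * Complex.exp (t * u * Complex.I)) P :=
  hg.mul_bdd (c := 1) (by fun_prop : Continuous _).aestronglyMeasurable
    (.of_forall fun t ↦ norm_cexp_mul_mul_I t u |>.le)

lemma integral_integral_mul_cexp_eq_integral_mul_charFun {P ν : Measure ℝ} [SFinite P]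
    [IsFiniteMeasure ν] {g : ℝ → ℂ} (hg : Integrable g P) :
    ∫ u, ∫ t, g t * Complex.exp (t * u * Complex.I) ∂P ∂ν = ∫ t, g t * charFun ν t ∂P := by
  have hint : Integrable (fun p : ℝ × ℝ ↦ g p.2 * Complex.exp (p.2 * p.1 * Complex.I))
      (ν.prod P) :=
    (hg.comp_snd ν).mul_bdd (c := 1)
      (by fun_prop : Continuous fun p : ℝ × ℝ ↦ _).aestronglyMeasurable
      (.of_forall fun p ↦ norm_cexp_mul_mul_I p.2 p.1 |>.le)
  rw [integral_integral_swap hint]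
  simp_rw [integral_const_mul, charFun_apply_real]

lemma integral_deriv_mul_cexp {g g' : ℝ → ℂ} (hg : ∀ t, HasDerivAt g (g' t) t)
    (hg_int : Integrable g) (hg'_int : Integrable g') (u : ℝ) :
    ∫ t, g' t * Complex.exp (t * u * Complex.I)
      = -(Complex.I * (u * ∫ t, g t * Complex.exp (t * u * Complex.I))) := by
  have hint := (integrable_mul_cexp hg_int u).mul_const (u * Complex.I)
  simp_rw [mul_assoc (g _)] at hint
  rw [integral_deriv_mul_eq_neg_integral_mul_deriv hg hg_int hg'_int countable_empty
    (f := fun t : ℝ ↦ Complex.exp (t * u * Complex.I)) (C := 1) (by fun_prop)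
    (fun t ↦ norm_cexp_mul_mul_I t u |>.le) (fun t _ ↦ hasDerivAt_cexp_mul_mul_I u t) hint]
  simp_rw [← mul_assoc (g _), integral_mul_const]
  ring

/-- Laws whose characteristic function is differentiable off a countable set with integrable
derivative: the regularity that makes `x` times the density of the law bounded, without asking for
a finite mean. The exceptional set is `{0}` for stable laws of index at most one. -/
structure HasIntegrableCharFunDeriv (ν : Measure ℝ) : Prop where
  countable_not_differentiableAt : {t | ¬ DifferentiableAt ℝ (charFun ν) t}.Countable
  integrable_deriv : Integrable (deriv (charFun ν))

theorem HasIntegrableCharFunDeriv.integral_mul_integral_mul_cexp {ν : Measure ℝ}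
    [IsFiniteMeasure ν] (hν : HasIntegrableCharFunDeriv ν) {g g' : ℝ → ℂ} {C : ℝ}
    (hg : ∀ t, HasDerivAt g (g' t) t) (hg_int : Integrable g) (hg'_int : Integrable g')
    (hg_bdd : ∀ t, ‖g t‖ ≤ C) :
    Complex.I * ∫ u : ℝ, u * (∫ t, g t * Complex.exp (t * u * Complex.I)) ∂ν
      = ∫ t, g t * deriv (charFun ν) t := by
  have hg_cont : Continuous g := continuous_iff_continuousAt.2 fun t ↦ (hg t).continuousAt
  have hparts : ∫ t, g' t * charFun ν t = -∫ t, g t * deriv (charFun ν) t :=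
    integral_deriv_mul_eq_neg_integral_mul_deriv hg hg_int hg'_int
      hν.countable_not_differentiableAt continuous_charFun norm_charFun_le
      (fun t ht ↦ (not_not.1 ht).hasDerivAt)
      (hν.integrable_deriv.bdd_mul hg_cont.aestronglyMeasurable (.of_forall hg_bdd))
  rw [← neg_eq_iff_eq_neg.2 hparts, ← integral_integral_mul_cexp_eq_integral_mul_charFun hg'_int]
  simp_rw [integral_deriv_mul_cexp hg hg_int hg'_int, integral_neg, neg_neg, integral_const_mul]

/-- The density of `𝒩(τ, 1)` modulated at frequency `v`, whose Fourier transform is a translate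
of a modulated Gaussian. -/
noncomputable def modulatedGaussian (τ v t : ℝ) : ℂ :=
  gaussianPDFReal τ 1 t * Complex.exp (t * v * Complex.I)

section ModulatedGaussian

variable (τ v : ℝ)

lemma gaussianPDFReal_one_le_one (t : ℝ) : gaussianPDFReal τ 1 t ≤ 1 := by
  have hsqrt : 1 ≤ √(2 * π * 1) := by
    rw [Real.one_le_sqrt]
    linarith [pi_gt_three]
  have hexp : rexp (-(t - τ) ^ 2 / (2 * 1)) ≤ 1 := by
    rw [Real.exp_le_one_iff]
    linarith [sq_nonneg (t - τ)]
  exact mul_le_one₀ (inv_le_one_of_one_le₀ hsqrt) (exp_pos _).le hexp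

lemma norm_modulatedGaussian (t : ℝ) : ‖modulatedGaussian τ v t‖ = gaussianPDFReal τ 1 t := by
  rw [modulatedGaussian, norm_mul, ← Complex.ofReal_mul, Complex.norm_exp_ofReal_mul_I, mul_one,
    Complex.norm_real, Real.norm_of_nonneg (gaussianPDFReal_nonneg τ 1 t)]

lemma norm_modulatedGaussian_le_one (t : ℝ) : ‖modulatedGaussian τ v t‖ ≤ 1 :=
  (norm_modulatedGaussian τ v t).trans_le (gaussianPDFReal_one_le_one τ t)

lemma hasDerivAt_gaussianPDFReal (σ : NNReal) (t : ℝ) :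
    HasDerivAt (gaussianPDFReal τ σ) (-((t - τ) / σ) * gaussianPDFReal τ σ t) t := by
  have hquad : HasDerivAt (fun t : ℝ ↦ -(t - τ) ^ 2 / (2 * σ)) (-((t - τ) / σ)) t := by
    convert! ((((hasDerivAt_id t).sub_const τ).pow 2).neg.div_const (2 * (σ : ℝ))) using 1
    simp only [Nat.cast_ofNat, id_eq, Nat.add_one_sub_one, pow_one, mul_one]
    ring
  convert! hquad.exp.const_mul (√(2 * π * σ))⁻¹ using 1
  simp only [gaussianPDFReal]
  ring

lemma hasDerivAt_modulatedGaussian (t : ℝ) :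
    HasDerivAt (modulatedGaussian τ v)
      ((-(t - τ) + v * Complex.I) * modulatedGaussian τ v t) t := by
  convert! (hasDerivAt_gaussianPDFReal τ 1 t).ofReal_comp.mul
    (hasDerivAt_cexp_mul_mul_I v t) using 1
  simp only [modulatedGaussian, NNReal.coe_one, div_one]
  push_cast
  ring

lemma integrable_modulatedGaussian : Integrable (modulatedGaussian τ v) :=
  integrable_mul_cexp (integrable_gaussianPDFReal τ 1).ofReal v

lemma integrable_deriv_modulatedGaussian :
    Integrable fun t : ℝ ↦ (-(t - τ) + v * Complex.I) * modulatedGaussian τ v t := by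
  have hlinear : Integrable fun t ↦ -(t - τ) * gaussianPDFReal τ 1 t := by
    refine (((integrable_mul_exp_neg_mul_sq (b := 1 / 2) (by norm_num)).comp_sub_right
      τ).const_mul (-(√(2 * π * 1))⁻¹)).congr (.of_forall fun t ↦ ?_)
    simp only [gaussianPDFReal, NNReal.coe_one]
    ring_nf
  refine ((integrable_mul_cexp hlinear.ofReal v).add
    ((integrable_modulatedGaussian τ v).const_mul (v * Complex.I))).congr (.of_forall fun t ↦ ?_)
  simp only [modulatedGaussian, Pi.add_apply, Complex.coe_algebraMap]
  push_cast
  ring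

lemma integral_modulatedGaussian_mul_cexp (u : ℝ) :
    ∫ t, modulatedGaussian τ v t * Complex.exp (t * u * Complex.I)
      = charFun (gaussianReal τ 1) (u + v) := by
  rw [charFun_apply_real, integral_gaussianReal_eq_integral_smul one_ne_zero]
  congr 1 with t
  rw [modulatedGaussian, Complex.real_smul, mul_assoc, ← Complex.exp_add]
  push_cast
  ring_nf

end ModulatedGaussian

lemma charFun_gaussianReal_one (τ y : ℝ) :
    charFun (gaussianReal τ 1) y = rexp (-y ^ 2 / 2) * Complex.exp (y * τ * Complex.I) := by
  rw [charFun_gaussianReal, Complex.ofReal_exp, ← Complex.exp_add]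
  push_cast
  ring_nf

lemma norm_charFun_gaussianReal_one (τ y : ℝ) :
    ‖charFun (gaussianReal τ 1) y‖ = rexp (-y ^ 2 / 2) := by
  rw [charFun_gaussianReal_one, norm_mul, norm_cexp_mul_mul_I, mul_one, Complex.norm_real,
    Real.norm_of_nonneg (exp_pos _).le]

lemma abs_mul_exp_neg_sq_div_two_le_one (x : ℝ) : |x| * rexp (-x ^ 2 / 2) ≤ 1 := by
  have habs : |x| ≤ rexp (x ^ 2 / 2) := by
    nlinarith [add_one_le_exp (x ^ 2 / 2), sq_abs x, sq_nonneg (|x| - 1)]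
  rwa [neg_div, exp_neg, ← div_eq_mul_inv, div_le_one (exp_pos _)]

lemma abs_mul_exp_neg_sq_add_div_two_le (u v : ℝ) :
    |u| * rexp (-(u + v) ^ 2 / 2) ≤ 1 + |v| := by
  have hu : |u| ≤ |u + v| + |v| := by simpa using abs_sub (u + v) v
  have hexp : rexp (-(u + v) ^ 2 / 2) ≤ 1 := by
    rw [exp_le_one_iff]
    linarith [sq_nonneg (u + v)]
  calc |u| * rexp (-(u + v) ^ 2 / 2)
      ≤ (|u + v| + |v|) * rexp (-(u + v) ^ 2 / 2) := by gcongr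
    _ ≤ 1 + |v| := by
      rw [add_mul]
      exact add_le_add (abs_mul_exp_neg_sq_div_two_le_one _)
        (mul_le_of_le_one_right (abs_nonneg v) hexp)

/-- Where `u` and `v` have the same sign the weight is at most `exp (-u ^ 2 / 2)`, and elsewhere
`|u| = -sign v * u`; so a bound on a signed integral in `u` bounds the absolute one. -/
lemma abs_mul_exp_neg_sq_add_div_two_le_sub (u v : ℝ) :
    |u| * rexp (-(u + v) ^ 2 / 2) ≤ 2 - SignType.sign v * (u * rexp (-(u + v) ^ 2 / 2)) := by
  set w := rexp (-(u + v) ^ 2 / 2)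
  have hsame (huv : 0 ≤ u * v) : |u| * w ≤ 1 := by
    have hw_le : w ≤ rexp (-u ^ 2 / 2) := exp_le_exp.2 (by linarith [sq_nonneg v, add_sq u v])
    exact (mul_le_mul_of_nonneg_left hw_le (abs_nonneg u)).trans
      (abs_mul_exp_neg_sq_div_two_le_one u)
  rcases lt_trichotomy v 0 with hv | rfl | hv
  · rw [sign_neg hv, SignType.coe_neg_one]
    rcases le_total u 0 with hu | hu
    · have hle := hsame (mul_nonneg_of_nonpos_of_nonpos hu hv.le)
      rw [abs_of_nonpos hu] at hle ⊢
      linarith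
    · rw [abs_of_nonneg hu]
      linarith
  · simpa using (hsame (by simp)).trans one_le_two
  · rw [sign_pos hv, SignType.coe_one]
    rcases le_total 0 u with hu | hu
    · have hle := hsame (mul_nonneg hu hv.le)
      rw [abs_of_nonneg hu] at hle ⊢
      linarith
    · rw [abs_of_nonpos hu]
      linarith

lemma integrable_mul_exp_neg_sq_add_div_two (ν : Measure ℝ) [IsFiniteMeasure ν] (v : ℝ) :
    Integrable (fun u ↦ u * rexp (-(u + v) ^ 2 / 2)) ν := by
  refine .of_bound (C := 1 + |v|) (by fun_prop : Continuous _).aestronglyMeasurable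
    (.of_forall fun u ↦ ?_)
  rw [norm_mul, Real.norm_eq_abs, Real.norm_of_nonneg (exp_pos _).le]
  exact abs_mul_exp_neg_sq_add_div_two_le u v

lemma integral_abs_mul_exp_neg_sq_add_div_two_le (ν : Measure ℝ) [IsFiniteMeasure ν] (v : ℝ) :
    ∫ u, |u| * rexp (-(u + v) ^ 2 / 2) ∂ν
      ≤ 2 * ν.real univ + |∫ u, u * rexp (-(u + v) ^ 2 / 2) ∂ν| := by
  have hint := integrable_mul_exp_neg_sq_add_div_two ν v
  have hsign : |(SignType.sign v : ℝ)| ≤ 1 := by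
    rcases lt_trichotomy v 0 with hv | rfl | hv <;> simp [*]
  calc ∫ u, |u| * rexp (-(u + v) ^ 2 / 2) ∂ν
      ≤ ∫ u, (2 - SignType.sign v * (u * rexp (-(u + v) ^ 2 / 2))) ∂ν :=
        integral_mono (by simpa [abs_mul] using hint.abs)
          ((integrable_const 2).sub (hint.const_mul _))
          fun u ↦ abs_mul_exp_neg_sq_add_div_two_le_sub u v
    _ = 2 * ν.real univ - SignType.sign v * ∫ u, u * rexp (-(u + v) ^ 2 / 2) ∂ν := by
        rw [integral_sub (integrable_const 2) (hint.const_mul _), integral_const_mul,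
          integral_const, smul_eq_mul, mul_comm]
    _ ≤ 2 * ν.real univ + |∫ u, u * rexp (-(u + v) ^ 2 / 2) ∂ν| := by
        rw [sub_eq_add_neg]
        gcongr
        refine (neg_le_abs _).trans ?_
        rw [abs_mul]
        exact mul_le_of_le_one_left (abs_nonneg _) hsign

namespace HasIntegrableCharFunDeriv

variable {ν ν' : Measure ℝ} [IsFiniteMeasure ν] [IsFiniteMeasure ν']

lemma integral_mul_charFun_gaussianReal (hν : HasIntegrableCharFunDeriv ν) (τ v : ℝ) :
    Complex.I * ∫ u : ℝ, u * charFun (gaussianReal τ 1) (u + v) ∂ν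
      = ∫ t, modulatedGaussian τ v t * deriv (charFun ν) t := by
  simp_rw [← integral_modulatedGaussian_mul_cexp]
  exact hν.integral_mul_integral_mul_cexp (hasDerivAt_modulatedGaussian τ v)
    (integrable_modulatedGaussian τ v) (integrable_deriv_modulatedGaussian τ v)
    (norm_modulatedGaussian_le_one τ v)

lemma abs_integral_mul_exp_neg_sq_add_div_two_le (hν : HasIntegrableCharFunDeriv ν) (v : ℝ) :
    |∫ u, u * rexp (-(u + v) ^ 2 / 2) ∂ν| ≤ ∫ t, ‖deriv (charFun ν) t‖ := by
  have hreal : ((∫ u, u * rexp (-(u + v) ^ 2 / 2) ∂ν : ℝ) : ℂ)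
      = ∫ u : ℝ, u * charFun (gaussianReal 0 1) (u + v) ∂ν := by
    simp_rw [← integral_complex_ofReal, charFun_gaussianReal_one]
    simp
  calc |∫ u, u * rexp (-(u + v) ^ 2 / 2) ∂ν|
      = ‖∫ t, modulatedGaussian 0 v t * deriv (charFun ν) t‖ := by
        rw [← hν.integral_mul_charFun_gaussianReal, ← hreal, norm_mul, Complex.norm_I, one_mul,
          Complex.norm_real, Real.norm_eq_abs]
    _ ≤ ∫ t, ‖deriv (charFun ν) t‖ := by
        refine norm_integral_le_of_norm_le hν.integrable_deriv.norm (.of_forall fun t ↦ ?_)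
        rw [norm_mul]
        exact mul_le_of_le_one_left (norm_nonneg _) (norm_modulatedGaussian_le_one 0 v t)

lemma integrable_prod_fst_mul_charFun_gaussianReal (hν : HasIntegrableCharFunDeriv ν) (τ : ℝ) :
    Integrable (fun p : ℝ × ℝ ↦ p.1 * charFun (gaussianReal τ 1) (p.1 + p.2)) (ν.prod ν') := by
  have hnorm (u v : ℝ) : ‖u * charFun (gaussianReal τ 1) (u + v)‖
      = |u| * rexp (-(u + v) ^ 2 / 2) := by
    rw [norm_mul, Complex.norm_real, Real.norm_eq_abs, norm_charFun_gaussianReal_one]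
  have hcont : Continuous fun p : ℝ × ℝ ↦ p.1 * charFun (gaussianReal τ 1) (p.1 + p.2) := by
    simp_rw [charFun_gaussianReal]
    fun_prop
  rw [integrable_prod_iff' hcont.aestronglyMeasurable]
  have hmeas := hcont.norm.stronglyMeasurable.integral_prod_left' (μ := ν)
  simp only [hnorm] at hmeas ⊢
  refine ⟨.of_forall fun v ↦ ?_, .of_bound (C := 2 * ν.real univ + ∫ t, ‖deriv (charFun ν) t‖)
    hmeas.aestronglyMeasurable (.of_forall fun v ↦ ?_)⟩
  · refine (integrable_mul_exp_neg_sq_add_div_two ν v).mono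
      (hcont.comp (by fun_prop : Continuous fun u ↦ (u, v))).aestronglyMeasurable
      (.of_forall fun u ↦ ?_)
    rw [hnorm, norm_mul, Real.norm_eq_abs, Real.norm_of_nonneg (exp_pos _).le]
  · rw [Real.norm_of_nonneg (by positivity)]
    exact (integral_abs_mul_exp_neg_sq_add_div_two_le ν v).trans
      (by gcongr; exact hν.abs_integral_mul_exp_neg_sq_add_div_two_le v)

lemma integral_prod_fst_mul_charFun_gaussianReal (hν : HasIntegrableCharFunDeriv ν) (τ : ℝ) :
    Complex.I * ∫ p : ℝ × ℝ, p.1 * charFun (gaussianReal τ 1) (p.1 + p.2) ∂(ν.prod ν')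
      = ∫ t, gaussianPDFReal τ 1 t * (deriv (charFun ν) t * charFun ν' t) := by
  have hint : Integrable fun t ↦ gaussianPDFReal τ 1 t * deriv (charFun ν) t := by
    refine hν.integrable_deriv.bdd_mul (c := 1)
      (measurable_gaussianPDFReal τ 1).complex_ofReal.aestronglyMeasurable (.of_forall fun t ↦ ?_)
    rw [Complex.norm_real, Real.norm_of_nonneg (gaussianPDFReal_nonneg τ 1 t)]
    exact gaussianPDFReal_one_le_one τ t
  rw [integral_prod_symm _ (hν.integrable_prod_fst_mul_charFun_gaussianReal τ),
    ← integral_const_mul]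
  simp_rw [hν.integral_mul_charFun_gaussianReal, ← mul_assoc (Complex.ofReal _),
    ← integral_integral_mul_cexp_eq_integral_mul_charFun hint, modulatedGaussian]
  simp_rw [mul_right_comm]

end HasIntegrableCharFunDeriv

namespace HasIntegrableCharFunDeriv

variable {ν ν' : Measure ℝ} [IsFiniteMeasure ν] [IsFiniteMeasure ν']

lemma integrable_prod_snd_mul_charFun_gaussianReal (hν' : HasIntegrableCharFunDeriv ν') (τ : ℝ) :
    Integrable (fun p : ℝ × ℝ ↦ p.2 * charFun (gaussianReal τ 1) (p.1 + p.2)) (ν.prod ν') := by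
  simpa [Function.comp_def, add_comm] using
    (hν'.integrable_prod_fst_mul_charFun_gaussianReal (ν' := ν) τ).swap

lemma integral_prod_snd_mul_charFun_gaussianReal (hν' : HasIntegrableCharFunDeriv ν') (τ : ℝ) :
    Complex.I * ∫ p : ℝ × ℝ, p.2 * charFun (gaussianReal τ 1) (p.1 + p.2) ∂(ν.prod ν')
      = ∫ t, gaussianPDFReal τ 1 t * (charFun ν t * deriv (charFun ν') t) := by
  rw [← integral_prod_swap]
  simpa [add_comm, mul_comm (charFun ν _)] using
    hν'.integral_prod_fst_mul_charFun_gaussianReal (ν' := ν) τ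

lemma integrable_prod_sub_mul_charFun_gaussianReal (hν : HasIntegrableCharFunDeriv ν)
    (hν' : HasIntegrableCharFunDeriv ν') (a b τ : ℝ) :
    Integrable (fun p : ℝ × ℝ ↦ ((b * p.1 - a * p.2 : ℝ) : ℂ)
      * charFun (gaussianReal τ 1) (p.1 + p.2)) (ν.prod ν') := by
  refine (((hν.integrable_prod_fst_mul_charFun_gaussianReal τ).const_mul (b : ℂ)).sub
    ((hν'.integrable_prod_snd_mul_charFun_gaussianReal τ).const_mul (a : ℂ))).congr
    (.of_forall fun p ↦ ?_)
  simp only [Pi.sub_apply]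
  push_cast
  ring

lemma integral_prod_sub_mul_charFun_gaussianReal_eq_zero (hν : HasIntegrableCharFunDeriv ν)
    (hν' : HasIntegrableCharFunDeriv ν') {a b : ℝ}
    (h : ∀ᵐ t, b * (deriv (charFun ν) t * charFun ν' t)
      = a * (charFun ν t * deriv (charFun ν') t)) (τ : ℝ) :
    ∫ p : ℝ × ℝ, ((b * p.1 - a * p.2 : ℝ) : ℂ)
      * charFun (gaussianReal τ 1) (p.1 + p.2) ∂(ν.prod ν') = 0 := by
  have hbalance : b * ∫ t, gaussianPDFReal τ 1 t * (deriv (charFun ν) t * charFun ν' t)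
      = a * ∫ t, gaussianPDFReal τ 1 t * (charFun ν t * deriv (charFun ν') t) := by
    rw [← integral_const_mul, ← integral_const_mul]
    refine integral_congr_ae (h.mono fun t ht ↦ ?_)
    linear_combination (gaussianPDFReal τ 1 t : ℂ) * ht
  rw [← hν.integral_prod_fst_mul_charFun_gaussianReal,
    ← hν'.integral_prod_snd_mul_charFun_gaussianReal] at hbalance
  have hsub : ∫ p : ℝ × ℝ, ((b * p.1 - a * p.2 : ℝ) : ℂ)
        * charFun (gaussianReal τ 1) (p.1 + p.2) ∂(ν.prod ν')
      = b * (∫ p : ℝ × ℝ, p.1 * charFun (gaussianReal τ 1) (p.1 + p.2) ∂(ν.prod ν'))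
        - a * (∫ p : ℝ × ℝ, p.2 * charFun (gaussianReal τ 1) (p.1 + p.2) ∂(ν.prod ν')) := by
    rw [← integral_const_mul, ← integral_const_mul, ← integral_sub
      ((hν.integrable_prod_fst_mul_charFun_gaussianReal τ).const_mul _)
      ((hν'.integrable_prod_snd_mul_charFun_gaussianReal τ).const_mul _)]
    congr 1 with p
    push_cast
    ring
  rw [hsub]
  exact mul_left_cancel₀ Complex.I_ne_zero (by linear_combination hbalance)

end HasIntegrableCharFunDeriv

section CondMean

variable {Ω E : Type*} [MeasurableSpace Ω] {μ : Measure Ω} [NormedAddCommGroup E]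
  [InnerProductSpace ℝ E] [CompleteSpace E] [SecondCountableTopology E] [MeasurableSpace E]
  [BorelSpace E]

lemma ae_eq_zero_of_forall_integral_mul_cexp_eq_zero {P : Measure E}
    {m : E → ℝ} (hm : Integrable m P)
    (h : ∀ τ : E, ∫ y, m y * Complex.exp (inner ℝ y τ * Complex.I) ∂P = 0) : m =ᵐ[P] 0 := by
  have : IsFiniteMeasure (P.withDensity fun y ↦ ENNReal.ofReal (m y)) :=
    isFiniteMeasure_withDensity_ofReal hm.2
  have : IsFiniteMeasure (P.withDensity fun y ↦ ENNReal.ofReal (-m y)) :=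
    isFiniteMeasure_withDensity_ofReal hm.neg.2
  have hpos := hm.aemeasurable.ennreal_ofReal
  have hneg : AEMeasurable (fun y ↦ ENNReal.ofReal (-m y)) P :=
    hm.neg.aemeasurable.ennreal_ofReal
  have hparts (y : E) : (ENNReal.ofReal (m y)).toReal - (ENNReal.ofReal (-m y)).toReal = m y := by
    rw [ENNReal.toReal_ofReal', ENNReal.toReal_ofReal', max_zero_sub_max_neg_zero_eq_self]
  have hint {g : E → ℝ} (hg : Integrable g P) (τ : E) : Integrable (fun y ↦
      (ENNReal.ofReal (g y)).toReal • Complex.exp (inner ℝ y τ * Complex.I)) P := by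
    simp_rw [ENNReal.toReal_ofReal', Complex.real_smul]
    exact hg.pos_part.ofReal.mul_bdd (c := 1) (by fun_prop)
      (.of_forall fun y ↦ (Complex.norm_exp_ofReal_mul_I _).le)
  have heq : P.withDensity (fun y ↦ ENNReal.ofReal (m y))
      = P.withDensity (fun y ↦ ENNReal.ofReal (-m y)) := by
    refine Measure.ext_of_charFun (funext fun τ ↦ ?_)
    rw [charFun_apply, charFun_apply,
      integral_withDensity_eq_integral_toReal_smul₀ hpos (by simp),
      integral_withDensity_eq_integral_toReal_smul₀ hneg (by simp), ← sub_eq_zero,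
      ← integral_sub (hint hm τ) (hint (g := fun y ↦ -m y) hm.neg τ), ← h τ]
    congr 1 with y
    rw [← sub_smul, hparts, Complex.real_smul]
  filter_upwards [(withDensity_eq_iff hpos hneg hm.lintegral_lt_top.ne).1 heq] with y hy
  rw [Pi.zero_apply, ← hparts, hy, sub_self]

variable [IsFiniteMeasure μ]

lemma ae_integral_condDistrib_eq_zero_of_forall_integral_mul_cexp_eq_zero {S : Type*}
    [MeasurableSpace S] [StandardBorelSpace S] [Nonempty S] {X : Ω → S} {Y : Ω → E}
    (hX : AEMeasurable X μ) {f : E × S → ℝ}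
    (hf : Integrable f (μ.map fun ω ↦ (Y ω, X ω)))
    (h : ∀ τ : E, ∫ p, f p * Complex.exp (inner ℝ p.1 τ * Complex.I)
      ∂(μ.map fun ω ↦ (Y ω, X ω)) = 0) :
    ∀ᵐ y ∂(μ.map Y), ∫ x, f (y, x) ∂(condDistrib X Y μ y) = 0 := by
  refine ae_eq_zero_of_forall_integral_mul_cexp_eq_zero (hf.integral_condDistrib_map hX)
    fun τ ↦ ?_
  have hint : Integrable (fun p ↦ f p * Complex.exp (inner ℝ p.1 τ * Complex.I))
      (μ.map fun ω ↦ (Y ω, X ω)) :=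
    hf.ofReal.mul_bdd (c := 1) (by fun_prop)
      (.of_forall fun p ↦ (Complex.norm_exp_ofReal_mul_I _).le)
  rw [← h τ]
  rw [← compProd_map_condDistrib hX] at hint ⊢
  simp_rw [Measure.integral_compProd hint, integral_mul_const, integral_complex_ofReal]

theorem ae_integral_condDistrib_eq_of_forall_integral_weight_mul_sub_mul_cexp_eq_zero
    {X : Ω → ℝ} {Y : Ω → E} (hX : AEMeasurable X μ) (hY : AEMeasurable Y μ) {w h : E → ℝ}
    (hw : Measurable w) (hw0 : ∀ y, w y ≠ 0) (hh : Measurable h)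
    (hint : Integrable (fun ω ↦ w (Y ω) * (X ω - h (Y ω))) μ)
    (horth : ∀ τ : E, ∫ ω, ((w (Y ω) * (X ω - h (Y ω)) : ℝ) : ℂ)
      * Complex.exp (inner ℝ (Y ω) τ * Complex.I) ∂μ = 0) :
    ∀ᵐ y ∂(μ.map Y), Integrable (fun x ↦ x) (condDistrib X Y μ y) ∧
      ∫ x, x ∂(condDistrib X Y μ y) = h y := by
  let f : E × ℝ → ℝ := fun p ↦ w p.1 * (p.2 - h p.1)
  have hf_meas : Measurable f := by fun_prop
  have hf : Integrable f (μ.map fun ω ↦ (Y ω, X ω)) :=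
    (integrable_map_measure hf_meas.aestronglyMeasurable (hY.prodMk hX)).2 hint
  have hzero := ae_integral_condDistrib_eq_zero_of_forall_integral_mul_cexp_eq_zero hX hf
    fun τ ↦ by
      rw [integral_map (hY.prodMk hX) (by fun_prop)]
      exact horth τ
  filter_upwards [hzero, hf.condDistrib_ae_map hX] with y hy_zero hy_int
  have hsub : Integrable (fun x ↦ x - h y) (condDistrib X Y μ y) :=
    (integrable_const_mul_iff (hw0 y).isUnit _).1 hy_int
  have hid : Integrable (fun x ↦ x) (condDistrib X Y μ y) := by
    simpa [Pi.add_def] using hsub.add (integrable_const (h y))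
  refine ⟨hid, ?_⟩
  simp only [f] at hy_zero
  rw [integral_const_mul, mul_eq_zero_iff_left (hw0 y), integral_sub hid (integrable_const _),
    integral_const, probReal_univ, one_smul, sub_eq_zero] at hy_zero
  exact hy_zero

theorem ae_integral_condDistrib_add_eq_of_indepFun {U V : Ω → ℝ} (hU : AEMeasurable U μ)
    (hV : AEMeasurable V μ) (hindep : IndepFun U V μ)
    (hU' : HasIntegrableCharFunDeriv (μ.map U)) (hV' : HasIntegrableCharFunDeriv (μ.map V))
    {a b : ℝ} (hab : a + b ≠ 0)
    (hderiv : ∀ᵐ t, b * (deriv (charFun (μ.map U)) t * charFun (μ.map V) t)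
      = a * (charFun (μ.map U) t * deriv (charFun (μ.map V)) t)) (p q : ℝ) :
    ∀ᵐ y ∂(μ.map fun ω ↦ U ω + V ω),
      Integrable (fun x ↦ x)
        (condDistrib (fun ω ↦ p * U ω + q * V ω) (fun ω ↦ U ω + V ω) μ y) ∧
      ∫ x, x ∂(condDistrib (fun ω ↦ p * U ω + q * V ω) (fun ω ↦ U ω + V ω) μ y)
        = (a * p + b * q) / (a + b) * y := by
  have hprod := hindep.map_prod_eq_prod_map_map hU hV
  have hresidual (ω : Ω) : p * U ω + q * V ω - (a * p + b * q) / (a + b) * (U ω + V ω)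
      = (p - q) / (a + b) * (b * U ω - a * V ω) := by
    field_simp
    ring
  have hweight (τ : ℝ) (ω : Ω) : ((rexp (-(U ω + V ω) ^ 2 / 2) * (p * U ω + q * V ω
        - (a * p + b * q) / (a + b) * (U ω + V ω)) : ℝ) : ℂ)
        * Complex.exp (inner ℝ (U ω + V ω) τ * Complex.I)
      = ((p - q) / (a + b) : ℝ) * (((b * U ω - a * V ω : ℝ) : ℂ)
        * charFun (gaussianReal τ 1) (U ω + V ω)) := by
    rw [hresidual, charFun_gaussianReal_one, real_inner_comm]
    simp only [RCLike.inner_apply, conj_trivial]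
    push_cast
    ring
  have hint (τ : ℝ) := hU'.integrable_prod_sub_mul_charFun_gaussianReal hV' a b τ
  simp_rw [← hprod] at hint
  refine ae_integral_condDistrib_eq_of_forall_integral_weight_mul_sub_mul_cexp_eq_zero
    (by fun_prop) (by fun_prop) (w := fun y ↦ rexp (-y ^ 2 / 2)) (by fun_prop)
    (fun y ↦ (exp_pos _).ne') (by fun_prop) ?_ fun τ ↦ ?_
  · have h := (((hint 0).comp_aemeasurable (hU.prodMk hV)).const_mul
      (((p - q) / (a + b) : ℝ) : ℂ))
    simp only [Function.comp_apply, ← hweight, inner_zero_right, Complex.ofReal_zero, zero_mul,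
      Complex.exp_zero, mul_one] at h
    exact h.re
  · simp_rw [hweight, integral_const_mul]
    have h := hU'.integral_prod_sub_mul_charFun_gaussianReal_eq_zero hV' hderiv τ
    rw [← hprod, integral_map (hU.prodMk hV) (hprod ▸ (hint τ).aestronglyMeasurable)] at h
    rw [h, mul_zero]

end CondMean

section Stable

variable {α γ γ₁ γ₂ : ℝ} {ν ν₁ ν₂ : Measure ℝ}

/-- Symmetric `α`-stable (SαS) laws with scale `γ`, encoded by their characteristic function
`t ↦ exp (-γ ^ α * |t| ^ α)`. -/
def IsSymmStable (α γ : ℝ) (ν : Measure ℝ) : Prop :=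
  ∀ t : ℝ, charFun ν t = Complex.exp (-((γ ^ α * |t| ^ α : ℝ) : ℂ))

lemma isSymmStable_map_iff {Ω : Type*} [MeasurableSpace Ω] {μ : Measure Ω} {Z : Ω → ℝ}
    (hZ : AEMeasurable Z μ) :
    IsSymmStable α γ (μ.map Z) ↔ ∀ t : ℝ, ∫ ω, Complex.exp (((t * Z ω : ℝ) : ℂ) * Complex.I) ∂μ
      = Complex.exp (-((γ ^ α * |t| ^ α : ℝ) : ℂ)) := by
  refine forall_congr' fun t ↦ ?_
  rw [charFun_apply_real, integral_map hZ (by fun_prop)]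
  simp_rw [Complex.ofReal_mul]

lemma integrable_comp_abs {F : Type*} [NormedAddCommGroup F] {f : ℝ → F}
    (hf : IntegrableOn f (Ioi 0)) : Integrable fun t ↦ f |t| := by
  have hpos : IntegrableOn (fun t ↦ f |t|) (Ioi 0) :=
    hf.congr_fun (fun t ht ↦ by rw [abs_of_pos ht]) measurableSet_Ioi
  have hneg : IntegrableOn (fun t ↦ f |t|) (Iic 0) := by
    rw [integrableOn_Iic_iff_integrableOn_Iio]
    simpa using hpos.comp_neg
  simpa using hneg.union hpos

namespace IsSymmStable

lemma map_const_mul {Ω : Type*} [MeasurableSpace Ω] {μ : Measure Ω} {Z : Ω → ℝ}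
    (hZ : AEMeasurable Z μ) (h : IsSymmStable α γ (μ.map Z)) (hγ : 0 ≤ γ) (a : ℝ) :
    IsSymmStable α (|a| * γ) (μ.map fun ω ↦ a * Z ω) := by
  intro t
  have hmap : μ.map (fun ω ↦ a * Z ω) = (μ.map Z).map (a * ·) :=
    (AEMeasurable.map_map_of_aemeasurable (by fun_prop) hZ).symm
  rw [hmap, charFun_map_mul, h, abs_mul, mul_rpow (abs_nonneg a) (abs_nonneg t),
    mul_rpow (abs_nonneg a) hγ]
  ring_nf

lemma norm_charFun (h : IsSymmStable α γ ν) (t : ℝ) :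
    ‖charFun ν t‖ = rexp (-(γ ^ α * |t| ^ α)) := by
  rw [h, ← Complex.ofReal_neg, Complex.norm_exp_ofReal]

lemma hasDerivAt_charFun (h : IsSymmStable α γ ν) {t : ℝ} (ht : t ≠ 0) :
    HasDerivAt (charFun ν)
      (-((γ ^ α * (SignType.sign t * α * |t| ^ (α - 1)) : ℝ) : ℂ) * charFun ν t) t := by
  have hexponent := (((hasDerivAt_abs ht).rpow_const (p := α)
    (.inl (abs_ne_zero.2 ht))).const_mul (γ ^ α)).ofReal_comp.fun_neg.cexp
  rw [h t, mul_comm, show charFun ν = _ from funext h]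
  exact hexponent

lemma hasIntegrableCharFunDeriv (h : IsSymmStable α γ ν) (hα : 0 < α) (hγ : 0 < γ) :
    HasIntegrableCharFunDeriv ν where
  countable_not_differentiableAt :=
    (countable_singleton 0).mono fun t ht ↦ by
      by_contra ht0
      exact ht (h.hasDerivAt_charFun ht0).differentiableAt
  integrable_deriv := by
    have hbound : Integrable fun t : ℝ ↦
        γ ^ α * α * (|t| ^ (α - 1) * rexp (-γ ^ α * |t| ^ α)) :=
      (integrable_comp_abs (integrableOn_rpow_mul_exp_neg_mul_rpow (by linarith) hα
        (rpow_pos_of_pos hγ α))).const_mul _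
    refine hbound.mono' (stronglyMeasurable_deriv _).aestronglyMeasurable
      ((Measure.ae_ne volume 0).mono fun t ht ↦ le_of_eq ?_)
    have hsign : |(SignType.sign t : ℝ)| = 1 := by
      rcases ht.lt_or_gt with ht | ht <;> simp [ht]
    rw [(h.hasDerivAt_charFun ht).deriv, norm_mul, h.norm_charFun, norm_neg, Complex.norm_real,
      Real.norm_eq_abs, abs_mul, abs_mul, abs_mul, hsign, abs_of_pos hα,
      abs_of_pos (rpow_pos_of_pos hγ α), abs_of_nonneg (by positivity)]
    ring_nf

lemma ae_rpow_mul_deriv_charFun_mul_charFun (h₁ : IsSymmStable α γ₁ ν₁)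
    (h₂ : IsSymmStable α γ₂ ν₂) :
    ∀ᵐ t, (γ₂ ^ α : ℝ) * (deriv (charFun ν₁) t * charFun ν₂ t)
      = (γ₁ ^ α : ℝ) * (charFun ν₁ t * deriv (charFun ν₂) t) := by
  refine (Measure.ae_ne volume 0).mono fun t ht ↦ ?_
  rw [(h₁.hasDerivAt_charFun ht).deriv, (h₂.hasDerivAt_charFun ht).deriv]
  push_cast
  ring

end IsSymmStable

end Stable

theorem linearMix_condMean_linear_general
    {Ω : Type*} [MeasurableSpace Ω] {μ : Measure Ω} [IsFiniteMeasure μ]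
    {α γ₁ γ₂ : ℝ} (hα : 0 < α) (hγ₁ : 0 < γ₁) (hγ₂ : 0 < γ₂)
    (a₁₁ a₁₂ : ℝ) {a₂₁ a₂₂ : ℝ} (ha₂₁ : a₂₁ ≠ 0) (ha₂₂ : a₂₂ ≠ 0)
    {Z₁ Z₂ : Ω → ℝ} (hZ₁ : AEMeasurable Z₁ μ) (hZ₂ : AEMeasurable Z₂ μ)
    (hindep : IndepFun Z₁ Z₂ μ)
    (hstable₁ : IsSymmStable α γ₁ (μ.map Z₁)) (hstable₂ : IsSymmStable α γ₂ (μ.map Z₂))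
    {X Y : Ω → ℝ} (hX : X = fun ω ↦ a₁₁ * Z₁ ω + a₁₂ * Z₂ ω)
    (hY : Y = fun ω ↦ a₂₁ * Z₁ ω + a₂₂ * Z₂ ω) :
    ∀ᵐ y ∂(μ.map Y),
      Integrable (fun x ↦ x) (condDistrib X Y μ y) ∧
      ∫ x, x ∂(condDistrib X Y μ y)
        = (((|a₂₁| * γ₁) ^ α * (a₁₁ / a₂₁) + (|a₂₂| * γ₂) ^ α * (a₁₂ / a₂₂))
            / ((|a₂₁| * γ₁) ^ α + (|a₂₂| * γ₂) ^ α)) * y := by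
  have hscale₁ : 0 < |a₂₁| * γ₁ := by positivity
  have hscale₂ : 0 < |a₂₂| * γ₂ := by positivity
  have hU := hstable₁.map_const_mul hZ₁ hγ₁.le a₂₁
  have hV := hstable₂.map_const_mul hZ₂ hγ₂.le a₂₂
  have hX' : X = fun ω ↦ a₁₁ / a₂₁ * (a₂₁ * Z₁ ω) + a₁₂ / a₂₂ * (a₂₂ * Z₂ ω) := by
    simp only [hX, ← mul_assoc, div_mul_cancel₀ _ ha₂₁, div_mul_cancel₀ _ ha₂₂]
  rw [hX', hY]
  exact ae_integral_condDistrib_add_eq_of_indepFun (hZ₁.const_mul a₂₁) (hZ₂.const_mul a₂₂)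
    (hindep.comp (measurable_const_mul a₂₁) (measurable_const_mul a₂₂))
    (hU.hasIntegrableCharFunDeriv hα hscale₁) (hV.hasIntegrableCharFunDeriv hα hscale₂)
    (add_pos (rpow_pos_of_pos hscale₁ α) (rpow_pos_of_pos hscale₂ α)).ne'
    (hU.ae_rpow_mul_deriv_charFun_mul_charFun hV) _ _

/-- Under the linear-mix model (`X = a₁₁Z₁ + a₁₂Z₂`, `Y = a₂₁Z₁ + a₂₂Z₂` with `Z₁, Z₂`
independent SαS variables), the conditional mean of `X` given `Y = y` exists and is linear
in `y`. -/
theorem linearMix_condMean_linear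
    {Ω : Type*} [MeasurableSpace Ω] {μ : Measure Ω} [IsProbabilityMeasure μ]
    (α γ₁ γ₂ : ℝ) (hα : α ∈ Set.Ioo (0 : ℝ) 2) (hγ₁ : 0 < γ₁) (hγ₂ : 0 < γ₂)
    (a₁₁ a₁₂ a₂₁ a₂₂ : ℝ) (ha₂₁ : a₂₁ ≠ 0) (ha₂₂ : a₂₂ ≠ 0)
    (hdet : a₁₁ * a₂₂ - a₁₂ * a₂₁ ≠ 0)
    (Z₁ Z₂ : Ω → ℝ) (hZ₁ : Measurable Z₁) (hZ₂ : Measurable Z₂)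
    (hindep : IndepFun Z₁ Z₂ μ)
    (hchar₁ : ∀ t : ℝ, ∫ ω, Complex.exp (((t * Z₁ ω : ℝ) : ℂ) * Complex.I) ∂μ
      = Complex.exp (-((γ₁ ^ α * |t| ^ α : ℝ) : ℂ)))
    (hchar₂ : ∀ t : ℝ, ∫ ω, Complex.exp (((t * Z₂ ω : ℝ) : ℂ) * Complex.I) ∂μ
      = Complex.exp (-((γ₂ ^ α * |t| ^ α : ℝ) : ℂ)))
    (X Y : Ω → ℝ) (hX : X = fun ω => a₁₁ * Z₁ ω + a₁₂ * Z₂ ω)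
    (hY : Y = fun ω => a₂₁ * Z₁ ω + a₂₂ * Z₂ ω) :
    ∀ᵐ y ∂(μ.map Y),
      Integrable (fun x => x) (condDistrib X Y μ y) ∧
      ∫ x, x ∂(condDistrib X Y μ y)
        = (((|a₂₁| * γ₁) ^ α * (a₁₁ / a₂₁) + (|a₂₂| * γ₂) ^ α * (a₁₂ / a₂₂))
            / ((|a₂₁| * γ₁) ^ α + (|a₂₂| * γ₂) ^ α)) * y :=
  linearMix_condMean_linear_general hα.1 hγ₁ hγ₂ a₁₁ a₁₂ ha₂₁ ha₂₂ hZ₁.aemeasurable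
    hZ₂.aemeasurable hindep ((isSymmStable_map_iff hZ₁.aemeasurable).2 hchar₁)
    ((isSymmStable_map_iff hZ₂.aemeasurable).2 hchar₂) hX hY
end

section
/- Derivative of the partially inverted joint characteristic function: let α ∈ (0,2), γ_{Z₁}, γ_{Z₂} > 0, and a₁₁, a₁₂, a₂₁, a₂₂ ∈ ℝ with a₂₁ ≠ 0, a₂₂ ≠ 0, a₁₁a₂₂ − a₁₂a₂₁ ≠ 0. Define φ(t,s) = exp(−γ_{Z₁}^α|a₁₁t + a₂₁s|^α − γ_{Z₂}^α|a₁₂t + a₂₂s|^α) and, for fixed y ∈ ℝ, I(t) = ∫_ℝ φ(t,s)·exp(−i s y) ds (a complex-valued integral). Then I is differentiable at t = 0 with derivative I′(0) = (2i/((|a₂₁|γ_{Z₁})^α + (|a₂₂|γ_{Z₂})^α)) · ((a₁₁/a₂₁)(|a₂₁|γ_{Z₁})^α + (a₁₂/a₂₂)(|a₂₂|γ_{Z₂})^α) · y · ∫₀^∞ exp(−((|a₂₁|γ_{Z₁})^α + (|a₂₂|γ_{Z₂})^α) s^α) cos(s y) ds. -/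
open MeasureTheory Real Set

/-!
The substitution `s ↦ s - (a₁₂ / a₂₂) t` turns `I(t)` into a phase times an integral in which only
the first factor of `φ` still depends on `t`, by a translation of `s`. That factor
`h s = exp (-c |s| ^ α)` is not differentiable at `0` when `α ≤ 1`, and for `α < 1` the moving
singularity of `h' (s + t)` rules out a dominating function for differentiation under the integral
sign. Instead, `h (s + t) - h s = ∫ r in 0..t, h' (s + r)`, Fubini's theorem and the continuity of
translation give the derivative, because `h'` is integrable. At `t = 0` the derivative of the first
factor times the second is the fraction `c₁ / (c₁ + c₂)` of the derivative of their product
`exp (-(c₁ + c₂) |s| ^ α)`, so its Fourier integral at `y` is `i y c₁ / (c₁ + c₂)` times that of the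
product, which is twice a cosine integral because the product is even.
-/

/-- The function `h` is the continuous representative of an element of the Sobolev space
`W^{1,1}(ℝ)` with weak derivative `h'`, which is expressed through the fundamental theorem of
calculus so that `h` may fail to be differentiable at some points. -/
structure HasIntegrableWeakDeriv (h h' : ℝ → ℝ) : Prop where
  integrable : Integrable h
  integrable_deriv : Integrable h'
  integral_eq_sub : ∀ a b : ℝ, ∫ x in a..b, h' x = h b - h a

theorem hasIntegrableWeakDeriv_of_hasDerivAt_off_countable {h h' : ℝ → ℝ} {S : Set ℝ}
    (hS : S.Countable) (hcont : Continuous h) (hderiv : ∀ x ∉ S, HasDerivAt h (h' x) x)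
    (hint : Integrable h) (hint' : Integrable h') : HasIntegrableWeakDeriv h h' where
  integrable := hint
  integrable_deriv := hint'
  integral_eq_sub _ _ := integral_eq_of_hasDerivAt_off_countable h h' hS hcont.continuousOn
    (fun x hx => hderiv x hx.2) hint'.intervalIntegrable

section Translation

variable {E : Type*} [NormedAddCommGroup E] [NormedSpace ℝ E] {F : ℝ → E} {C : ℝ}

theorem integrable_translate_smul {f : ℝ → ℝ} (hf : Integrable f)
    (hF : AEStronglyMeasurable F) (hFC : ∀ s, ‖F s‖ ≤ C) (t : ℝ) :
    Integrable fun s => f (s + t) • F s :=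
  (hf.comp_add_right t).smul_bdd C hF (.of_forall hFC)

theorem integrable_prod_translate_smul {f : ℝ → ℝ} (hf : Integrable f)
    (hF : AEStronglyMeasurable F) (hFC : ∀ s, ‖F s‖ ≤ C) (μ : Measure ℝ) [IsFiniteMeasure μ] :
    Integrable (fun p : ℝ × ℝ => f (p.2 + p.1) • F p.2) (μ.prod volume) :=
  ((measurePreserving_prod_add_right μ volume).integrable_comp_of_integrable
    (hf.comp_snd μ)).smul_bdd C hF.comp_snd (.of_forall fun p => hFC p.2)

theorem continuous_integral_translate_smul {f : ℝ → ℝ} (hf : Integrable f)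
    (hF : Continuous F) (hFC : ∀ s, ‖F s‖ ≤ C) : Continuous fun t => ∫ s, f (s + t) • F s := by
  have translate_F (t : ℝ) : ∫ s, f (s + t) • F s = ∫ s, f s • F (s - t) := by
    simpa using integral_add_right_eq_self (fun s => f s • F (s - t)) t
  simp_rw [translate_F]
  refine continuous_of_dominated (bound := fun s => ‖f s‖ * C)
    (fun t => hf.aestronglyMeasurable.smul (by fun_prop)) (fun t => .of_forall fun s => ?_)
    (hf.norm.mul_const C) (.of_forall fun s => by fun_prop)
  rw [norm_smul]
  gcongr
  exact hFC _

theorem HasIntegrableWeakDeriv.hasDerivAt_integral_translate_smul [CompleteSpace E] {h h' : ℝ → ℝ}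
    (hh : HasIntegrableWeakDeriv h h') (hF : Continuous F) (hFC : ∀ s, ‖F s‖ ≤ C) (t : ℝ) :
    HasDerivAt (fun t => ∫ s, h (s + t) • F s) (∫ s, h' (s + t) • F s) t := by
  have hF' : AEStronglyMeasurable F := hF.aestronglyMeasurable
  have (u : ℝ) : IsFiniteMeasure (volume.restrict (uIoc 0 u)) := ⟨by simp [uIoc]⟩
  have inner_integral (u s : ℝ) :
      ∫ r in (0 : ℝ)..u, h' (s + r) • F s = h (s + u) • F s - h (s + 0) • F s := by
    rw [intervalIntegral.integral_smul_const, intervalIntegral.integral_comp_add_left,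
      hh.integral_eq_sub, sub_smul]
  have increment (u : ℝ) : ∫ s, h (s + u) • F s =
      (∫ s, h (s + 0) • F s) + ∫ r in (0 : ℝ)..u, ∫ s, h' (s + r) • F s := by
    rw [intervalIntegral_integral_swap
      (integrable_prod_translate_smul hh.integrable_deriv hF' hFC _)]
    simp_rw [inner_integral]
    rw [integral_sub (integrable_translate_smul hh.integrable hF' hFC u)
      (integrable_translate_smul hh.integrable hF' hFC 0), add_sub_cancel]
  have hcont := continuous_integral_translate_smul hh.integrable_deriv hF hFC
  rw [funext increment]
  exact (hcont.integral_hasStrictDerivAt 0 t).hasDerivAt.const_add _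

end Translation

theorem hasDerivAt_probChar_mul (y t : ℝ) :
    HasDerivAt (fun t : ℝ => (probChar (t * y) : ℂ)) (probChar (t * y) * (y * Complex.I)) t := by
  simp only [probChar_apply]
  simpa using! (((hasDerivAt_id t).mul_const y).ofReal_comp.mul_const Complex.I).cexp

theorem integral_translate_smul_probChar (f : ℝ → ℝ) (y t : ℝ) :
    ∫ s, f (s + t) • (probChar (-(s * y)) : ℂ) =
      probChar (t * y) * ∫ s, f s • (probChar (-(s * y)) : ℂ) := by
  rw [← integral_const_mul, ← integral_sub_right_eq_self _ t]
  congr 1 with s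
  rw [mul_smul_comm, ← Circle.coe_mul, ← AddChar.map_add_eq_mul]
  ring_nf

theorem HasIntegrableWeakDeriv.integral_deriv_smul_probChar {h h' : ℝ → ℝ}
    (hh : HasIntegrableWeakDeriv h h') (y : ℝ) :
    ∫ s, h' s • (probChar (-(s * y)) : ℂ) =
      y * Complex.I * ∫ s, h s • (probChar (-(s * y)) : ℂ) := by
  have hderiv := hh.hasDerivAt_integral_translate_smul (F := fun s => (probChar (-(s * y)) : ℂ))
    (by fun_prop) (fun s => (Circle.norm_coe _).le) 0
  simp_rw [integral_translate_smul_probChar h y] at hderiv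
  simpa using hderiv.unique ((hasDerivAt_probChar_mul y 0).mul_const _)

theorem HasIntegrableWeakDeriv.hasDerivAt_integral_translate_mul_smul_probChar {h h' f : ℝ → ℝ}
    {C : ℝ} (hh : HasIntegrableWeakDeriv h h') (hf : Continuous f) (hfC : ∀ s, ‖f s‖ ≤ C)
    (b₁ b₂ y : ℝ) :
    HasDerivAt (fun t => ∫ s, (h (s + b₁ * t) * f (s + b₂ * t)) • (probChar (-(s * y)) : ℂ))
      (b₂ * (y * Complex.I) * (∫ s, (h s * f s) • (probChar (-(s * y)) : ℂ)) +
        (b₁ - b₂) * ∫ s, (h' s * f s) • (probChar (-(s * y)) : ℂ)) 0 := by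
  have shear (t : ℝ) :
      ∫ s, (h (s + b₁ * t) * f (s + b₂ * t)) • (probChar (-(s * y)) : ℂ) =
        probChar (b₂ * t * y) *
          ∫ s, h (s + (b₁ - b₂) * t) • f s • (probChar (-(s * y)) : ℂ) := by
    simp_rw [smul_smul]
    rw [← integral_translate_smul_probChar (fun s => h (s + (b₁ - b₂) * t) * f s)]
    congr 1 with s
    congr 3
    ring
  have linear (b : ℝ) : HasDerivAt (fun t => b * t) b 0 := by
    simpa using (hasDerivAt_id (0 : ℝ)).const_mul b
  have phase : HasDerivAt (fun t => (probChar (b₂ * t * y) : ℂ)) (b₂ * (y * Complex.I)) 0 :=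
    ((hasDerivAt_probChar_mul y 0).scomp_of_eq 0 (linear b₂) (by simp)).congr_deriv (by simp)
  have bound (s : ℝ) : ‖f s • (probChar (-(s * y)) : ℂ)‖ ≤ C := by
    simpa only [norm_smul, Circle.norm_coe, mul_one] using hfC s
  have translation := (hh.hasDerivAt_integral_translate_smul (by fun_prop) bound 0).scomp_of_eq 0
    (linear (b₁ - b₂)) (by simp)
  rw [funext shear]
  simpa [mul_assoc] using! phase.fun_mul translation

theorem integral_comp_abs_smul_probChar {f : ℝ → ℝ} (hf : Integrable fun s => f |s|) (y : ℝ) :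
    ∫ s, f |s| • (probChar (-(s * y)) : ℂ) =
      2 * ((∫ s in Ioi 0, f s * cos (s * y) : ℝ) : ℂ) := by
  set g : ℝ → ℂ := fun s => f |s| • (probChar (-(s * y)) : ℂ)
  have hg : Integrable g := hf.smul_bdd 1 (by fun_prop) (.of_forall fun s => (Circle.norm_coe _).le)
  have symmetrize (s : ℝ) : (g s + g (-s)) / 2 = ((f |s| * cos (|s| * y) : ℝ) : ℂ) := by
    have cos_abs_mul : cos (|s| * y) = cos (s * y) := by
      rw [← cos_abs, abs_mul, abs_abs, ← abs_mul, cos_abs]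
    simp only [g, cos_abs_mul, abs_neg, probChar_apply, Complex.real_smul]
    push_cast
    rw [Complex.cos]
    ring_nf
  calc ∫ s, g s = ∫ s, (g s + g (-s)) / 2 := by
        rw [integral_div, integral_add hg hg.comp_neg, integral_neg_eq_self, ← two_mul,
          mul_div_cancel_left₀ _ two_ne_zero]
    _ = ((∫ s, f |s| * cos (|s| * y) : ℝ) : ℂ) := by
        simp_rw [symmetrize]
        exact integral_ofReal
    _ = 2 * ((∫ s in Ioi 0, f s * cos (s * y) : ℝ) : ℂ) := by
        rw [integral_comp_abs (f := fun s => f s * cos (s * y))]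
        push_cast
        rfl

section StableCharFun

theorem integrable_abs_rpow_mul_exp_neg_mul_abs_rpow {p s b : ℝ} (hs : -1 < s) (hp : 0 < p)
    (hb : 0 < b) : Integrable fun x : ℝ => |x| ^ s * exp (-(b * |x| ^ p)) := by
  have := (integrable_fun_norm_addHaar (volume : Measure ℝ)
    (f := fun x => x ^ s * exp (-b * x ^ p))).2
    (by simpa using integrableOn_rpow_mul_exp_neg_mul_rpow hs hp hb)
  simpa using this

/-- The characteristic function of the symmetric `α`-stable law whose scale `γ` is encoded by
`c = γ ^ α`. -/
noncomputable def stableCharFun (α c s : ℝ) : ℝ := exp (-(c * |s| ^ α))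

variable {α c c₁ c₂ : ℝ}

theorem continuous_stableCharFun (hα : 0 ≤ α) (c : ℝ) : Continuous (stableCharFun α c) := by
  have : Continuous fun s : ℝ => |s| ^ α := continuous_abs.rpow_const fun _ => .inr hα
  unfold stableCharFun
  fun_prop

theorem norm_stableCharFun_le_one (hc : 0 ≤ c) (α s : ℝ) : ‖stableCharFun α c s‖ ≤ 1 := by
  rw [stableCharFun, norm_of_nonneg (exp_nonneg _), exp_le_one_iff, neg_nonpos]
  positivity

theorem stableCharFun_mul (α c₁ c₂ s : ℝ) :
    stableCharFun α c₁ s * stableCharFun α c₂ s = stableCharFun α (c₁ + c₂) s := by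
  simp only [stableCharFun, ← exp_add, add_mul, neg_add]

theorem hasDerivAt_stableCharFun (α c : ℝ) {s : ℝ} (hs : s ≠ 0) :
    HasDerivAt (stableCharFun α c)
      (-(c * (SignType.sign s * α * |s| ^ (α - 1))) * stableCharFun α c s) s := by
  have h := ((hasDerivAt_abs hs).rpow_const (p := α) (.inl (abs_ne_zero.2 hs))).const_mul c
  exact h.fun_neg.exp.congr_deriv (mul_comm _ _)

theorem integrable_stableCharFun (hα : 0 < α) (hc : 0 < c) : Integrable (stableCharFun α c) := by
  simpa using! integrable_abs_rpow_mul_exp_neg_mul_abs_rpow neg_one_lt_zero hα hc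

theorem integrable_deriv_stableCharFun (hα : 0 < α) (hc : 0 < c) :
    Integrable (deriv (stableCharFun α c)) := by
  have bound := (integrable_abs_rpow_mul_exp_neg_mul_abs_rpow (by linarith : -1 < α - 1)
    hα hc).const_mul (c * α)
  refine bound.mono' (aestronglyMeasurable_deriv _ _) ?_
  filter_upwards [Measure.ae_ne volume 0] with s hs
  have sign_le_one : |(SignType.sign s : ℝ)| ≤ 1 := by
    rcases hs.lt_or_gt with hs | hs <;> simp [hs]
  calc ‖deriv (stableCharFun α c) s‖
      = |(SignType.sign s : ℝ)| * (c * α * (|s| ^ (α - 1) * exp (-(c * |s| ^ α)))) := by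
        rw [(hasDerivAt_stableCharFun α c hs).deriv, stableCharFun]
        simp only [norm_mul, norm_neg, norm_eq_abs, abs_of_pos hc, abs_of_pos hα, abs_exp,
          abs_of_nonneg (rpow_nonneg (abs_nonneg s) _)]
        ring
    _ ≤ c * α * (|s| ^ (α - 1) * exp (-(c * |s| ^ α))) :=
        mul_le_of_le_one_left (by positivity) sign_le_one

theorem hasIntegrableWeakDeriv_stableCharFun (hα : 0 < α) (hc : 0 < c) :
    HasIntegrableWeakDeriv (stableCharFun α c) (deriv (stableCharFun α c)) :=
  hasIntegrableWeakDeriv_of_hasDerivAt_off_countable (countable_singleton 0)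
    (continuous_stableCharFun hα.le c)
    (fun _ hs => (hasDerivAt_stableCharFun α c hs).differentiableAt.hasDerivAt)
    (integrable_stableCharFun hα hc) (integrable_deriv_stableCharFun hα hc)

theorem deriv_stableCharFun_mul (hc : c₁ + c₂ ≠ 0) {s : ℝ} (hs : s ≠ 0) :
    deriv (stableCharFun α c₁) s * stableCharFun α c₂ s =
      c₁ / (c₁ + c₂) * deriv (stableCharFun α (c₁ + c₂)) s := by
  rw [(hasDerivAt_stableCharFun α c₁ hs).deriv, (hasDerivAt_stableCharFun α (c₁ + c₂) hs).deriv,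
    ← stableCharFun_mul]
  field_simp

theorem integral_deriv_stableCharFun_mul_smul_probChar (hα : 0 < α) (hc : 0 < c₁ + c₂) (y : ℝ) :
    ∫ s, (deriv (stableCharFun α c₁) s * stableCharFun α c₂ s) • (probChar (-(s * y)) : ℂ) =
      c₁ / (c₁ + c₂) * (y * Complex.I *
        ∫ s, stableCharFun α (c₁ + c₂) s • (probChar (-(s * y)) : ℂ)) := by
  rw [← (hasIntegrableWeakDeriv_stableCharFun hα hc).integral_deriv_smul_probChar,
    ← integral_const_mul]
  refine integral_congr_ae ?_
  filter_upwards [Measure.ae_ne volume 0] with s hs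
  simp [deriv_stableCharFun_mul hc.ne' hs, mul_assoc]

theorem hasDerivAt_integral_stableCharFun_mul (hα : 0 < α) (hc₁ : 0 < c₁) (hc₂ : 0 ≤ c₂)
    (b₁ b₂ y : ℝ) :
    HasDerivAt (fun t => ∫ s, (stableCharFun α c₁ (s + b₁ * t) * stableCharFun α c₂ (s + b₂ * t)) •
        (probChar (-(s * y)) : ℂ))
      ((b₁ * c₁ + b₂ * c₂) / (c₁ + c₂) * (y * Complex.I) *
        ∫ s, stableCharFun α (c₁ + c₂) s • (probChar (-(s * y)) : ℂ)) 0 := by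
  have hc : 0 < c₁ + c₂ := by positivity
  have hderiv := (hasIntegrableWeakDeriv_stableCharFun hα hc₁)
    |>.hasDerivAt_integral_translate_mul_smul_probChar (continuous_stableCharFun hα.le c₂)
      (norm_stableCharFun_le_one hc₂ α) b₁ b₂ y
  simp_rw [integral_deriv_stableCharFun_mul_smul_probChar hα hc, stableCharFun_mul] at hderiv
  refine hderiv.congr_deriv ?_
  have : (c₁ + c₂ : ℂ) ≠ 0 := mod_cast hc.ne'
  generalize ∫ s, stableCharFun α (c₁ + c₂) s • (probChar (-(s * y)) : ℂ) = J
  field_simp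
  ring

theorem rpow_mul_abs_add_rpow {γ a : ℝ} (hγ : 0 ≤ γ) (ha : a ≠ 0) (α b s t : ℝ) :
    γ ^ α * |b * t + a * s| ^ α = (|a| * γ) ^ α * |s + b / a * t| ^ α := by
  have factor : b * t + a * s = a * (s + b / a * t) := by
    field_simp
    ring
  rw [factor, abs_mul, mul_rpow (abs_nonneg _) (abs_nonneg _), mul_rpow (abs_nonneg _) hγ]
  ring

theorem integral_stableCharFun_smul_probChar (hα : 0 < α) (hc : 0 < c) (y : ℝ) :
    ∫ s, stableCharFun α c s • (probChar (-(s * y)) : ℂ) =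
      2 * ((∫ s in Ioi 0, exp (-(c * s ^ α)) * cos (s * y) : ℝ) : ℂ) :=
  integral_comp_abs_smul_probChar (f := fun s => exp (-(c * s ^ α)))
    (integrable_stableCharFun hα hc) y

end StableCharFun

theorem deriv_partially_inverted_charFun_general
    (α γ₁ γ₂ : ℝ) (hα : 0 < α) (hγ₁ : 0 < γ₁) (hγ₂ : 0 < γ₂)
    (a₁₁ a₁₂ a₂₁ a₂₂ : ℝ) (ha₂₁ : a₂₁ ≠ 0) (ha₂₂ : a₂₂ ≠ 0)
    (y : ℝ) (I : ℝ → ℂ)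
    (hI : I = fun t => ∫ s : ℝ,
      ((Real.exp (-(γ₁ ^ α * |a₁₁ * t + a₂₁ * s| ^ α + γ₂ ^ α * |a₁₂ * t + a₂₂ * s| ^ α)) : ℝ) : ℂ)
        * Complex.exp (-(((s * y : ℝ) : ℂ) * Complex.I))) :
    HasDerivAt I
      ((2 * Complex.I / (((|a₂₁| * γ₁) ^ α + (|a₂₂| * γ₂) ^ α : ℝ) : ℂ))
        * (((a₁₁ / a₂₁) * (|a₂₁| * γ₁) ^ α + (a₁₂ / a₂₂) * (|a₂₂| * γ₂) ^ α : ℝ) : ℂ)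
        * ((y : ℝ) : ℂ)
        * ((∫ s in Ioi (0 : ℝ),
            Real.exp (-(((|a₂₁| * γ₁) ^ α + (|a₂₂| * γ₂) ^ α) * s ^ α)) * Real.cos (s * y) :
              ℝ) : ℂ))
      0 := by
  have hc₁ : 0 < (|a₂₁| * γ₁) ^ α := by positivity
  have hc₂ : 0 < (|a₂₂| * γ₂) ^ α := by positivity
  have integrand_eq (t s : ℝ) :
      ((exp (-(γ₁ ^ α * |a₁₁ * t + a₂₁ * s| ^ α + γ₂ ^ α * |a₁₂ * t + a₂₂ * s| ^ α)) : ℝ) : ℂ)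
          * Complex.exp (-(((s * y : ℝ) : ℂ) * Complex.I)) =
        (stableCharFun α ((|a₂₁| * γ₁) ^ α) (s + a₁₁ / a₂₁ * t) *
          stableCharFun α ((|a₂₂| * γ₂) ^ α) (s + a₁₂ / a₂₂ * t)) •
            (probChar (-(s * y)) : ℂ) := by
    rw [rpow_mul_abs_add_rpow hγ₁.le ha₂₁, rpow_mul_abs_add_rpow hγ₂.le ha₂₂, neg_add, exp_add,
      probChar_apply, Complex.ofReal_neg, neg_mul, Complex.real_smul]
    rfl
  simp_rw [integrand_eq] at hI
  rw [hI]
  refine (hasDerivAt_integral_stableCharFun_mul hα hc₁ hc₂.le _ _ y).congr_deriv ?_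
  rw [integral_stableCharFun_smul_probChar hα (add_pos hc₁ hc₂)]
  push_cast
  ring

/-- Derivative at `t = 0` of the partially inverted joint characteristic function
`I(t) = ∫_ℝ φ(t,s) e^{−isy} ds`, where `φ` is the joint characteristic function of the
linear-mix stable vector. -/
theorem deriv_partially_inverted_charFun
    (α γ₁ γ₂ : ℝ) (hα : α ∈ Set.Ioo (0 : ℝ) 2) (hγ₁ : 0 < γ₁) (hγ₂ : 0 < γ₂)
    (a₁₁ a₁₂ a₂₁ a₂₂ : ℝ) (ha₂₁ : a₂₁ ≠ 0) (ha₂₂ : a₂₂ ≠ 0)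
    (hdet : a₁₁ * a₂₂ - a₁₂ * a₂₁ ≠ 0)
    (y : ℝ) (I : ℝ → ℂ)
    (hI : I = fun t => ∫ s : ℝ,
      ((Real.exp (-(γ₁ ^ α * |a₁₁ * t + a₂₁ * s| ^ α + γ₂ ^ α * |a₁₂ * t + a₂₂ * s| ^ α)) : ℝ) : ℂ)
        * Complex.exp (-(((s * y : ℝ) : ℂ) * Complex.I))) :
    HasDerivAt I
      ((2 * Complex.I / (((|a₂₁| * γ₁) ^ α + (|a₂₂| * γ₂) ^ α : ℝ) : ℂ))
        * (((a₁₁ / a₂₁) * (|a₂₁| * γ₁) ^ α + (a₁₂ / a₂₂) * (|a₂₂| * γ₂) ^ α : ℝ) : ℂ)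
        * ((y : ℝ) : ℂ)
        * ((∫ s in Ioi (0 : ℝ),
            Real.exp (-(((|a₂₁| * γ₁) ^ α + (|a₂₂| * γ₂) ^ α) * s ^ α)) * Real.cos (s * y) : ℝ) : ℂ))
      0 :=
  deriv_partially_inverted_charFun_general α γ₁ γ₂ hα.1 hγ₁ hγ₂ a₁₁ a₁₂ a₂₁ a₂₂ ha₂₁ ha₂₂ y I hI
end

section
/- Conditional representation for the sub-Gaussian model: under the sub-Gaussian model with |ρ| < 1, for (μ.map Y)-almost every y ∈ ℝ, the conditional law of X given Y = y satisfies condDistrib X Y μ y = Measure.map (fun (a, z) ↦ β·y + √a·z) ((condDistrib A Y μ y).prod (gaussianReal 0 (σ₁²(1−ρ²)))), where β = ρ·σ₁/σ₂; that is, conditionally on Y = y, X is distributed as β·y + √(A_y)·Z with A_y ~ condDistrib A Y μ y independent of Z ~ N(0, σ₁²(1−ρ²)). -/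
/-!
Regress `G₁` on `G₂`: the residual `G₁ - β G₂` with `β = ρσ₁/σ₂` is a centred Gaussian of variance
`σ₁²(1 - ρ²)` independent of `G₂`, because the joint characteristic function factorises. Since `A`
is independent of `(G₁, G₂)`, the residual is even independent of `(A, G₂)`, hence of `(A, Y)`.
Conditioning `X = βY + √A · (G₁ - β G₂)` on `Y` therefore freezes `Y`, replaces `A` by its
conditional law and leaves the law of the residual unchanged.
-/

open MeasureTheory ProbabilityTheory Real Set

open scoped RealInnerProductSpace

section Conditioning

variable {Ω 𝓨 𝓦 𝓩 𝓧 : Type*} {mΩ : MeasurableSpace Ω} {m𝓨 : MeasurableSpace 𝓨}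
  {m𝓦 : MeasurableSpace 𝓦} {m𝓩 : MeasurableSpace 𝓩} {m𝓧 : MeasurableSpace 𝓧} {μ : Measure Ω}

lemma compProd_map_id_prod {ν : Measure 𝓨} [SFinite ν] {κ : Kernel 𝓨 𝓦} [IsSFiniteKernel κ]
    {f : 𝓨 × 𝓦 → 𝓧} (hf : Measurable f) :
    ν ⊗ₘ (Kernel.id ×ₖ κ).map f = (ν ⊗ₘ κ).map (fun p ↦ (p.1, f p)) := by
  refine Measure.ext_of_lintegral _ fun h hh ↦ ?_
  rw [Measure.lintegral_compProd hh, lintegral_map hh (by fun_prop),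
    Measure.lintegral_compProd (by fun_prop)]
  refine lintegral_congr fun y ↦ ?_
  rw [Kernel.lintegral_map _ hf _ (by fun_prop), Kernel.lintegral_id_prod (by fun_prop)]

lemma condDistrib_comp_prodMk [IsFiniteMeasure μ] [StandardBorelSpace 𝓦] [Nonempty 𝓦]
    [StandardBorelSpace 𝓧] [Nonempty 𝓧] {Y : Ω → 𝓨} {W : Ω → 𝓦} (hY : AEMeasurable Y μ)
    (hW : AEMeasurable W μ) {f : 𝓨 × 𝓦 → 𝓧} (hf : Measurable f) :
    ∀ᵐ y ∂(μ.map Y), condDistrib (fun ω ↦ f (Y ω, W ω)) Y μ y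
      = (condDistrib W Y μ y).map (fun w ↦ f (y, w)) := by
  have hjoint : μ.map (fun ω ↦ (Y ω, f (Y ω, W ω)))
      = μ.map Y ⊗ₘ (Kernel.id ×ₖ condDistrib W Y μ).map f := by
    rw [compProd_map_id_prod hf, compProd_map_condDistrib hW,
      AEMeasurable.map_map_of_aemeasurable (by fun_prop) (by fun_prop)]
    rfl
  filter_upwards [condDistrib_ae_eq_of_measure_eq_compProd Y (by fun_prop) hjoint] with y hy
  rw [hy, Kernel.map_apply _ hf, Kernel.prod_apply, Kernel.id_apply, Measure.dirac_prod,
    Measure.map_map hf (by fun_prop)]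
  rfl

lemma kernel_compProd_const (κ : Kernel 𝓨 𝓦) [IsSFiniteKernel κ] (ν : Measure 𝓩) [SFinite ν] :
    κ ⊗ₖ Kernel.const (𝓨 × 𝓦) ν = κ ×ₖ Kernel.const 𝓨 ν := by
  ext1 y
  rw [Kernel.compProd_apply_eq_compProd_sectR, Kernel.prod_apply, Kernel.const_apply]
  exact Measure.compProd_const

lemma condDistrib_prodMk_of_indepFun [IsFiniteMeasure μ] [StandardBorelSpace 𝓦] [Nonempty 𝓦]
    [StandardBorelSpace 𝓩] [Nonempty 𝓩] {Y : Ω → 𝓨} {W : Ω → 𝓦} {Z : Ω → 𝓩}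
    (hY : AEMeasurable Y μ) (hW : AEMeasurable W μ) (hZ : AEMeasurable Z μ)
    (hindep : IndepFun (fun ω ↦ (Y ω, W ω)) Z μ) :
    condDistrib (fun ω ↦ (W ω, Z ω)) Y μ
      =ᵐ[μ.map Y] condDistrib W Y μ ×ₖ Kernel.const 𝓨 (μ.map Z) := by
  refine condDistrib_ae_eq_of_measure_eq_compProd Y (by fun_prop) ?_
  calc μ.map (fun ω ↦ (Y ω, W ω, Z ω))
    _ = (μ.map (fun ω ↦ ((Y ω, W ω), Z ω))).map MeasurableEquiv.prodAssoc := by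
      rw [AEMeasurable.map_map_of_aemeasurable (by fun_prop) (by fun_prop)]
      rfl
    _ = (μ.map Y ⊗ₘ condDistrib W Y μ ⊗ₘ Kernel.const _ (μ.map Z)).map
          MeasurableEquiv.prodAssoc := by
      rw [hindep.map_prod_eq_prod_map_map (by fun_prop) hZ, Measure.compProd_const,
        compProd_map_condDistrib hW]
    _ = μ.map Y ⊗ₘ (condDistrib W Y μ ×ₖ Kernel.const 𝓨 (μ.map Z)) := by
      rw [Measure.compProd_assoc', kernel_compProd_const]

lemma condDistrib_comp_prodMk_of_indepFun [IsFiniteMeasure μ] [StandardBorelSpace 𝓦] [Nonempty 𝓦]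
    [StandardBorelSpace 𝓩] [Nonempty 𝓩] [StandardBorelSpace 𝓧] [Nonempty 𝓧]
    {Y : Ω → 𝓨} {W : Ω → 𝓦} {Z : Ω → 𝓩} (hY : AEMeasurable Y μ) (hW : AEMeasurable W μ)
    (hZ : AEMeasurable Z μ) (hindep : IndepFun (fun ω ↦ (Y ω, W ω)) Z μ)
    {f : 𝓨 × 𝓦 × 𝓩 → 𝓧} (hf : Measurable f) :
    ∀ᵐ y ∂(μ.map Y), condDistrib (fun ω ↦ f (Y ω, W ω, Z ω)) Y μ y
      = ((condDistrib W Y μ y).prod (μ.map Z)).map (fun p ↦ f (y, p)) := by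
  filter_upwards [condDistrib_comp_prodMk hY (hW.prodMk hZ) hf,
    condDistrib_prodMk_of_indepFun hY hW hZ hindep] with y hcomp hprod
  rw [hcomp, hprod, Kernel.prod_apply, Kernel.const_apply]

lemma indepFun_prodMk_left_of_indepFun [IsFiniteMeasure μ] {W : Ω → 𝓦} {Y : Ω → 𝓨} {Z : Ω → 𝓩}
    (hW : AEMeasurable W μ) (hY : AEMeasurable Y μ) (hZ : AEMeasurable Z μ)
    (hindep : IndepFun W (fun ω ↦ (Y ω, Z ω)) μ) (hYZ : IndepFun Y Z μ) :
    IndepFun (fun ω ↦ (W ω, Y ω)) Z μ := by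
  have hWY : IndepFun W Y μ := hindep.comp measurable_id measurable_fst
  rw [indepFun_iff_map_prod_eq_prod_map_map (by fun_prop) hZ]
  refine MeasurableEquiv.prodAssoc.map_measurableEquiv_injective ?_
  calc (μ.map (fun ω ↦ ((W ω, Y ω), Z ω))).map MeasurableEquiv.prodAssoc
    _ = μ.map (fun ω ↦ (W ω, Y ω, Z ω)) := by
      rw [AEMeasurable.map_map_of_aemeasurable (by fun_prop) (by fun_prop)]
      rfl
    _ = (μ.map W).prod ((μ.map Y).prod (μ.map Z)) := by
      rw [hindep.map_prod_eq_prod_map_map hW (by fun_prop), hYZ.map_prod_eq_prod_map_map hY hZ]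
    _ = ((μ.map fun ω ↦ (W ω, Y ω)).prod (μ.map Z)).map MeasurableEquiv.prodAssoc := by
      rw [hWY.map_prod_eq_prod_map_map hW hY, Measure.prodAssoc_prod]

end Conditioning

section Regression

variable {Ω : Type*} {mΩ : MeasurableSpace Ω} {μ : Measure Ω}

lemma hasLaw_prod_of_integral_exp_eq_charFun_mul [IsFiniteMeasure μ] {E F : Type*}
    [NormedAddCommGroup E] [InnerProductSpace ℝ E] [CompleteSpace E] [SecondCountableTopology E]
    [MeasurableSpace E] [BorelSpace E]
    [NormedAddCommGroup F] [InnerProductSpace ℝ F] [CompleteSpace F] [SecondCountableTopology F]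
    [MeasurableSpace F] [BorelSpace F]
    {U : Ω → E} {V : Ω → F} (hU : AEMeasurable U μ) (hV : AEMeasurable V μ)
    {ν₁ : Measure E} {ν₂ : Measure F} [IsFiniteMeasure ν₁] [IsFiniteMeasure ν₂]
    (hchar : ∀ s t, ∫ ω, Complex.exp (((⟪U ω, s⟫ + ⟪V ω, t⟫ : ℝ) : ℂ) * Complex.I) ∂μ
      = charFun ν₁ s * charFun ν₂ t) :
    HasLaw (fun ω ↦ (U ω, V ω)) (ν₁.prod ν₂) μ where
  map_eq := by
    refine charFun_eq_prod_iff.1 fun t ↦ ?_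
    rw [AEMeasurable.map_map_of_aemeasurable (by fun_prop) (by fun_prop), charFun_apply,
      integral_map (by fun_prop) (by fun_prop), ← hchar]
    rfl

lemma hasLaw_prodMk_regression_residual_gaussianReal [IsFiniteMeasure μ] {G₁ G₂ : Ω → ℝ}
    (hG₁ : AEMeasurable G₁ μ) (hG₂ : AEMeasurable G₂ μ) {ρ σ₁ σ₂ : ℝ} (hσ₂ : σ₂ ≠ 0)
    (hρ : |ρ| ≤ 1)
    (hGauss : ∀ t s : ℝ, ∫ ω, Complex.exp (((t * G₁ ω + s * G₂ ω : ℝ) : ℂ) * Complex.I) ∂μ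
      = Complex.exp
          (-(((σ₁ ^ 2 * t ^ 2 + 2 * ρ * σ₁ * σ₂ * t * s + σ₂ ^ 2 * s ^ 2) / 2 : ℝ) : ℂ))) :
    HasLaw (fun ω ↦ (G₂ ω, G₁ ω - ρ * σ₁ / σ₂ * G₂ ω))
      ((gaussianReal 0 (σ₂ ^ 2).toNNReal).prod
        (gaussianReal 0 (σ₁ ^ 2 * (1 - ρ ^ 2)).toNNReal)) μ := by
  have hvar : 0 ≤ σ₁ ^ 2 * (1 - ρ ^ 2) :=
    mul_nonneg (sq_nonneg _) (sub_nonneg.2 ((sq_le_one_iff_abs_le_one ρ).2 hρ))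
  refine hasLaw_prod_of_integral_exp_eq_charFun_mul hG₂ (by fun_prop) fun s t ↦ ?_
  have hlinear : ∀ ω, ⟪G₂ ω, s⟫ + ⟪G₁ ω - ρ * σ₁ / σ₂ * G₂ ω, t⟫
      = t * G₁ ω + (s - t * (ρ * σ₁ / σ₂)) * G₂ ω := fun ω ↦ by
    simp only [Real.inner_apply]
    ring
  have hquadratic : σ₁ ^ 2 * t ^ 2 + 2 * ρ * σ₁ * σ₂ * t * (s - t * (ρ * σ₁ / σ₂))
      + σ₂ ^ 2 * (s - t * (ρ * σ₁ / σ₂)) ^ 2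
      = σ₂ ^ 2 * s ^ 2 + σ₁ ^ 2 * (1 - ρ ^ 2) * t ^ 2 := by
    field_simp
    ring
  simp_rw [hlinear]
  rw [hGauss, hquadratic, charFun_gaussianReal, charFun_gaussianReal,
    Real.coe_toNNReal _ (sq_nonneg _), Real.coe_toNNReal _ hvar, ← Complex.exp_add]
  push_cast
  ring_nf

end Regression

theorem subGaussian_conditional_representation_general
    {Ω 𝓐 : Type*} {mΩ : MeasurableSpace Ω} {m𝓐 : MeasurableSpace 𝓐} [StandardBorelSpace 𝓐]
    [Nonempty 𝓐] {μ : Measure Ω} [IsFiniteMeasure μ] {ρ σ₁ σ₂ : ℝ} (hσ₂ : σ₂ ≠ 0)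
    (hρ : |ρ| ≤ 1) {A : Ω → 𝓐} {G₁ G₂ : Ω → ℝ} {scale : 𝓐 → ℝ} (hA : AEMeasurable A μ)
    (hG₁ : AEMeasurable G₁ μ) (hG₂ : AEMeasurable G₂ μ) (hscale : Measurable scale)
    (hGauss : ∀ t s : ℝ, ∫ ω, Complex.exp (((t * G₁ ω + s * G₂ ω : ℝ) : ℂ) * Complex.I) ∂μ
      = Complex.exp (-(((σ₁ ^ 2 * t ^ 2 + 2 * ρ * σ₁ * σ₂ * t * s + σ₂ ^ 2 * s ^ 2) / 2 : ℝ) : ℂ)))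
    (hindep : IndepFun A (fun ω ↦ (G₁ ω, G₂ ω)) μ) {X Y : Ω → ℝ}
    (hX : X = fun ω ↦ scale (A ω) * G₁ ω) (hY : Y = fun ω ↦ scale (A ω) * G₂ ω) :
    ∀ᵐ y ∂(μ.map Y),
      condDistrib X Y μ y
        = ((condDistrib A Y μ y).prod (gaussianReal 0 (σ₁ ^ 2 * (1 - ρ ^ 2)).toNNReal)).map
            (fun p ↦ ρ * σ₁ / σ₂ * y + scale p.1 * p.2) := by
  set β := ρ * σ₁ / σ₂
  let Z : Ω → ℝ := fun ω ↦ G₁ ω - β * G₂ ω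
  have hYm : AEMeasurable Y μ := by rw [hY]; fun_prop
  have hlaw := hasLaw_prodMk_regression_residual_gaussianReal hG₁ hG₂ hσ₂ hρ hGauss
  have hG₂law : HasLaw G₂ _ μ := measurePreserving_fst.fun_comp_hasLaw hlaw
  have hZlaw : HasLaw Z _ μ := measurePreserving_snd.fun_comp_hasLaw hlaw
  have hG₂Z : IndepFun G₂ Z μ := (indepFun_iff_hasLaw_prodMk_prod hG₂law hZlaw).2 hlaw
  have hA_G₂Z : IndepFun A (fun ω ↦ (G₂ ω, Z ω)) μ :=
    hindep.comp (ψ := fun g : ℝ × ℝ ↦ (g.2, g.1 - β * g.2)) measurable_id (by fun_prop)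
  have hAG₂_Z : IndepFun (fun ω ↦ (A ω, G₂ ω)) Z μ :=
    indepFun_prodMk_left_of_indepFun hA hG₂ hZlaw.aemeasurable hA_G₂Z hG₂Z
  have hYA_Z : IndepFun (fun ω ↦ (Y ω, A ω)) Z μ := by
    rw [hY]
    exact hAG₂_Z.comp (φ := fun p : 𝓐 × ℝ ↦ (scale p.1 * p.2, p.1)) (by fun_prop) measurable_id
  have hX_eq : X = fun ω ↦ β * Y ω + scale (A ω) * Z ω := by
    rw [hX, hY]
    ext ω
    ring
  rw [hX_eq, ← hZlaw.map_eq]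
  exact condDistrib_comp_prodMk_of_indepFun hYm hA hZlaw.aemeasurable hYA_Z
    (f := fun q : ℝ × 𝓐 × ℝ ↦ β * q.1 + scale q.2.1 * q.2.2) (by fun_prop)

/-- Conditional representation for the sub-Gaussian SαS model `X = √A·G₁`, `Y = √A·G₂`
(with `|ρ| < 1`): conditionally on `Y = y`, `X` is distributed as
`β·y + √(A_y)·Z` where `β = ρσ₁/σ₂`, `A_y ~ condDistrib A Y μ y` and,
independently, `Z ~ N(0, σ₁²(1−ρ²))`. -/
theorem subGaussian_conditional_representation
    {Ω : Type*} [MeasurableSpace Ω] {μ : Measure Ω} [IsProbabilityMeasure μ]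
    (α ρ σ₁ σ₂ : ℝ) (hα : α ∈ Set.Ioo (0 : ℝ) 2)
    (hσ₁ : 0 < σ₁) (hσ₂ : 0 < σ₂) (hρ : |ρ| < 1)
    (A G₁ G₂ : Ω → ℝ) (hA : Measurable A) (hG₁ : Measurable G₁) (hG₂ : Measurable G₂)
    (hApos : ∀ ω, 0 ≤ A ω)
    (hLaplace : ∀ u : ℝ, 0 ≤ u → ∫ ω, Real.exp (-u * A ω) ∂μ
      = Real.exp (-(Real.cos (π * α / 4) ^ (2 / α) * u) ^ (α / 2)))
    (hGauss : ∀ t s : ℝ, ∫ ω, Complex.exp (((t * G₁ ω + s * G₂ ω : ℝ) : ℂ) * Complex.I) ∂μ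
      = Complex.exp (-(((σ₁ ^ 2 * t ^ 2 + 2 * ρ * σ₁ * σ₂ * t * s + σ₂ ^ 2 * s ^ 2) / 2 : ℝ) : ℂ)))
    (hindep : IndepFun A (fun ω => (G₁ ω, G₂ ω)) μ)
    (X Y : Ω → ℝ) (hX : X = fun ω => Real.sqrt (A ω) * G₁ ω)
    (hY : Y = fun ω => Real.sqrt (A ω) * G₂ ω) :
    ∀ᵐ y ∂(μ.map Y),
      condDistrib X Y μ y
        = Measure.map (fun p : ℝ × ℝ => (ρ * σ₁ / σ₂) * y + Real.sqrt p.1 * p.2)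
            ((condDistrib A Y μ y).prod
              (gaussianReal 0 (Real.toNNReal (σ₁ ^ 2 * (1 - ρ ^ 2))))) := by
  exact subGaussian_conditional_representation_general hσ₂.ne' hρ.le hA.aemeasurable
    hG₁.aemeasurable hG₂.aemeasurable continuous_sqrt.measurable hGauss hindep hX hY
end

section
/- Linearity of the conditional mean in the sub-Gaussian model: under the sub-Gaussian model, for (μ.map Y)-almost every y ∈ ℝ, the identity function is integrable with respect to condDistrib X Y μ y and ∫ x d(condDistrib X Y μ y)(x) = (ρ·σ₁/σ₂)·y. -/
open MeasureTheory ProbabilityTheory Real Set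

/-!
Let `c = ρσ₁/σ₂` be the regression coefficient of `G₁` on `G₂`. The residual `Z = G₁ - c G₂` is
centered and independent of `G₂`, hence of `(√A, G₂)`. As `X - c Y = √A Z` while `Y` is a function
of `(√A, G₂)`, the tower property gives `E[X - c Y | Y] = 0`, which is the claim. However, `X` need
not be integrable, so the argument is run on the events `{Y ∈ s}` with `s` of finite length: the
density of `G₂` being bounded, `|r| P(r G₂ ∈ s)` is bounded uniformly in `r`, and therefore
`√A 1{Y ∈ s}` is integrable.
-/

section

open scoped ENNReal

lemma gaussianReal_le_smul_volume (m : ℝ) {v : NNReal} (hv : v ≠ 0) :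
    gaussianReal m v ≤ ENNReal.ofReal (√(2 * π * v))⁻¹ • volume := by
  rw [gaussianReal_of_var_ne_zero m hv, ← withDensity_const]
  refine withDensity_mono (ae_of_all _ fun x => ENNReal.ofReal_le_ofReal ?_)
  rw [gaussianPDFReal_def]
  refine mul_le_of_le_one_right (by positivity) (Real.exp_le_one_iff.2 ?_)
  exact div_nonpos_of_nonpos_of_nonneg (neg_nonpos.2 (sq_nonneg _)) (by positivity)

lemma enorm_mul_measure_preimage_mul_left_le {ν : Measure ℝ} {C : ℝ≥0∞} (hν : ν ≤ C • volume)
    (r : ℝ) (s : Set ℝ) : ‖r‖ₑ * ν ((r * ·) ⁻¹' s) ≤ C * volume s := by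
  rcases eq_or_ne r 0 with rfl | hr
  · simp
  calc ‖r‖ₑ * ν ((r * ·) ⁻¹' s)
      ≤ ‖r‖ₑ * (C * volume ((r * ·) ⁻¹' s)) := by gcongr; exact hν _
    _ = C * (‖r‖ₑ * ‖r⁻¹‖ₑ) * volume s := by
        rw [Real.volume_preimage_mul_left hr, ← ofReal_norm r⁻¹, Real.norm_eq_abs]; ring
    _ = C * volume s := by rw [← enorm_mul, mul_inv_cancel₀ hr, enorm_one, mul_one]

variable {Ω : Type*} [MeasurableSpace Ω] {μ : Measure Ω} [IsFiniteMeasure μ]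

lemma integrable_indicator_preimage_mul_of_indepFun {R W : Ω → ℝ} {C : ℝ≥0∞}
    {s : Set ℝ} (hR : Measurable R) (hW : Measurable W) (hRW : IndepFun R W μ)
    (hC : C ≠ ∞) (hWC : μ.map W ≤ C • volume) (hs : MeasurableSet s) (hs_fin : volume s ≠ ∞) :
    Integrable (((fun ω => R ω * W ω) ⁻¹' s).indicator R) μ := by
  refine ⟨(hR.indicator ((hR.mul hW) hs)).aestronglyMeasurable, ?_⟩
  have hs' : MeasurableSet {p : ℝ × ℝ | p.1 * p.2 ∈ s} := (measurable_fst.mul measurable_snd) hs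
  calc ∫⁻ ω, ‖((fun ω => R ω * W ω) ⁻¹' s).indicator R ω‖ₑ ∂μ
      = ∫⁻ p, {p : ℝ × ℝ | p.1 * p.2 ∈ s}.indicator (fun p => ‖p.1‖ₑ) p
          ∂μ.map (fun ω => (R ω, W ω)) := by
        rw [lintegral_map (measurable_fst.enorm.indicator hs') (hR.prodMk hW)]
        refine lintegral_congr fun ω => ?_
        rw [enorm_indicator_eq_indicator_enorm]
        rfl
    _ = ∫⁻ r, ‖r‖ₑ * μ.map W ((r * ·) ⁻¹' s) ∂μ.map R := by
        rw [hRW.map_prod_eq_prod_map_map hR.aemeasurable hW.aemeasurable,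
          lintegral_prod _ (measurable_fst.enorm.indicator hs').aemeasurable]
        exact lintegral_congr fun r => lintegral_indicator_const (measurable_const_mul r hs) ‖r‖ₑ
    _ ≤ ∫⁻ _, C * volume s ∂μ.map R :=
        lintegral_mono fun r => enorm_mul_measure_preimage_mul_left_le hWC r s
    _ < ∞ := by
        rw [lintegral_const]
        exact ENNReal.mul_lt_top (ENNReal.mul_lt_top hC.lt_top hs_fin.lt_top) (measure_lt_top _ _)

lemma indepFun_prodMk_right_of_prodMk_left {β γ δ : Type*} [MeasurableSpace β] [MeasurableSpace γ]
    [MeasurableSpace δ] {f : Ω → β} {g : Ω → γ} {h : Ω → δ}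
    (hf : AEMeasurable f μ) (hg : AEMeasurable g μ) (hh : AEMeasurable h μ) (hfg : IndepFun f g μ)
    (hfgh : IndepFun (fun ω => (f ω, g ω)) h μ) : IndepFun f (fun ω => (g ω, h ω)) μ := by
  have hgh : IndepFun g h μ := hfgh.comp measurable_snd measurable_id
  rw [indepFun_iff_map_prod_eq_prod_map_map hf (hg.prodMk hh),
    hgh.map_prod_eq_prod_map_map hg hh, ← (measurePreserving_prodAssoc _ _ _).map_eq,
    ← hfg.map_prod_eq_prod_map_map hf hg,
    ← hfgh.map_prod_eq_prod_map_map (hf.prodMk hg) hh,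
    AEMeasurable.map_map_of_aemeasurable (by fun_prop) (by fun_prop)]
  rfl

lemma condExp_mul_ae_eq_zero_of_indep {Ω : Type*} {m₁ m₂ mΩ : MeasurableSpace Ω}
    {μ : Measure Ω} [IsFiniteMeasure μ] {f Z : Ω → ℝ} (hm₁₂ : m₁ ≤ m₂) (hm₂ : m₂ ≤ mΩ)
    (hf : StronglyMeasurable[m₂] f) (hZ : Measurable Z) (hZm₂ : Indep (.comap Z inferInstance) m₂ μ)
    (hZ_int : Integrable Z μ) (hfZ : Integrable (f * Z) μ) (hZ_mean : ∫ ω, Z ω ∂μ = 0) :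
    μ[f * Z | m₁] =ᵐ[μ] 0 := by
  have hZ_cond : μ[Z | m₂] =ᵐ[μ] fun _ => 0 := by
    simpa only [hZ_mean] using condExp_indep_eq hZ.comap_le hm₂
      (Measurable.stronglyMeasurable (comap_measurable Z)) hZm₂
  calc μ[f * Z | m₁]
      =ᵐ[μ] μ[μ[f * Z | m₂] | m₁] := (condExp_condExp_of_le hm₁₂ hm₂).symm
    _ =ᵐ[μ] μ[0 | m₁] := condExp_congr_ae <|
        (condExp_mul_of_stronglyMeasurable_left hf hfZ hZ_int).trans <| by
          filter_upwards [hZ_cond] with ω hω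
          simp [hω]
    _ = 0 := condExp_zero

section

variable {β E : Type*} [mβ : MeasurableSpace β] [NormedAddCommGroup E] [NormedSpace ℝ E]
    [CompleteSpace E] [SecondCountableTopology E] [MeasurableSpace E] [BorelSpace E]
    {X : Ω → E} {Y : Ω → β} {g : β → E}

lemma ae_condDistrib_mean_eq_of_condExp_indicator {s : Set β} (hX : AEMeasurable X μ)
    (hY : Measurable Y) (hg : Measurable g) (hs : MeasurableSet s)
    (h_int : Integrable ((Y ⁻¹' s).indicator fun ω => X ω - g (Y ω)) μ)
    (h_zero : μ[(Y ⁻¹' s).indicator fun ω => X ω - g (Y ω) | mβ.comap Y] =ᵐ[μ] 0) :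
    ∀ᵐ y ∂μ.map Y, y ∈ s → Integrable (fun x => x) (condDistrib X Y μ y) ∧
      ∫ x, x ∂condDistrib X Y μ y = g y := by
  let f : β × E → E := (Prod.fst ⁻¹' s).indicator fun p => p.2 - g p.1
  have hf : StronglyMeasurable f :=
    ((measurable_snd.sub (hg.comp measurable_fst)).indicator (measurable_fst hs)).stronglyMeasurable
  have hf_int : Integrable f (μ.map fun ω => (Y ω, X ω)) :=
    (integrable_map_measure hf.aestronglyMeasurable (hY.aemeasurable.prodMk hX)).2 h_int
  have hf_integral : ∀ᵐ y ∂μ.map Y, ∫ x, f (y, x) ∂condDistrib X Y μ y = 0 := by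
    have h_meas : MeasurableSet {y | ∫ x, f (y, x) ∂condDistrib X Y μ y = 0} :=
      hf.integral_kernel_prod_right'.measurable (measurableSet_singleton 0)
    rw [ae_map_iff hY.aemeasurable h_meas]
    exact (condExp_prod_ae_eq_integral_condDistrib hY hX hf h_int).symm.trans h_zero
  filter_upwards [hf_int.condDistrib_ae_map hX, hf_integral] with y hy_int hy_zero hys
  have hfy : (fun x => f (y, x)) = fun x => x - g y :=
    funext fun x => indicator_of_mem (show (y, x) ∈ Prod.fst ⁻¹' s from hys) _
  rw [hfy] at hy_int
  have hy_id : Integrable (fun x => x) (condDistrib X Y μ y) :=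
    (hy_int.add (integrable_const (g y))).congr (ae_of_all _ fun x => sub_add_cancel x (g y))
  refine ⟨hy_id, ?_⟩
  rwa [hfy, integral_sub hy_id (integrable_const _), integral_const, probReal_univ, one_smul,
    sub_eq_zero] at hy_zero

lemma ae_condDistrib_mean_eq_of_forall_condExp_indicator {ι : Type*} [Countable ι]
    {s : ι → Set β} (hX : AEMeasurable X μ) (hY : Measurable Y) (hg : Measurable g)
    (hs : ∀ i, MeasurableSet (s i)) (hs_univ : ⋃ i, s i = univ)
    (h_int : ∀ i, Integrable ((Y ⁻¹' s i).indicator fun ω => X ω - g (Y ω)) μ)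
    (h_zero : ∀ i, μ[(Y ⁻¹' s i).indicator fun ω => X ω - g (Y ω) | mβ.comap Y] =ᵐ[μ] 0) :
    ∀ᵐ y ∂μ.map Y, Integrable (fun x => x) (condDistrib X Y μ y) ∧
      ∫ x, x ∂condDistrib X Y μ y = g y := by
  have h_all : ∀ᵐ y ∂μ.map Y, ∀ i, y ∈ s i → Integrable (fun x => x) (condDistrib X Y μ y) ∧
      ∫ x, x ∂condDistrib X Y μ y = g y :=
    ae_all_iff.2 fun i =>
      ae_condDistrib_mean_eq_of_condExp_indicator hX hY hg (hs i) (h_int i) (h_zero i)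
  filter_upwards [h_all] with y hy
  obtain ⟨i, hi⟩ := iUnion_eq_univ_iff.1 hs_univ y
  exact hy i hi

end

section

variable {R Z W G₁ G₂ : Ω → ℝ} {c : ℝ} {C : ℝ≥0∞}

lemma integrable_and_condExp_indicator_preimage_mul_ae_eq_zero {s : Set ℝ} (hR : Measurable R)
    (hZ : Measurable Z) (hW : Measurable W) (hZWR : IndepFun Z (fun ω => (W ω, R ω)) μ)
    (hZ_int : Integrable Z μ) (hZ_mean : ∫ ω, Z ω ∂μ = 0) (hs : MeasurableSet s)
    (hRs_int : Integrable (((fun ω => R ω * W ω) ⁻¹' s).indicator R) μ) :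
    Integrable (((fun ω => R ω * W ω) ⁻¹' s).indicator fun ω => R ω * Z ω) μ ∧
      μ[((fun ω => R ω * W ω) ⁻¹' s).indicator (fun ω => R ω * Z ω) |
        .comap (fun ω => R ω * W ω) inferInstance] =ᵐ[μ] 0 := by
  let f : Ω → ℝ := ((fun ω => R ω * W ω) ⁻¹' s).indicator R
  have hfZ : ((fun ω => R ω * W ω) ⁻¹' s).indicator (fun ω => R ω * Z ω) = f * Z :=
    funext fun ω => indicator_mul_left _ R Z
  let m₂ : MeasurableSpace Ω := .comap (fun ω => (W ω, R ω)) inferInstance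
  have hWR : Measurable[m₂] fun ω => (W ω, R ω) := comap_measurable _
  have hRW : Measurable[m₂] fun ω => R ω * W ω :=
    (measurable_snd.mul measurable_fst).comp hWR
  have hf : Measurable[m₂] f := (measurable_snd.comp hWR).indicator (hRW hs)
  have hZm₂ : Indep (.comap Z inferInstance) m₂ μ := (IndepFun_iff_Indep _ _ _).1 hZWR
  have hfZ_indep : IndepFun f Z μ :=
    (IndepFun_iff_Indep _ _ _).2 (indep_of_indep_of_le_right hZm₂ hf.comap_le).symm
  have hfZ_int : Integrable (f * Z) μ := hfZ_indep.integrable_mul hRs_int hZ_int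
  rw [hfZ]
  exact ⟨hfZ_int, condExp_mul_ae_eq_zero_of_indep hRW.comap_le (hW.prodMk hR).comap_le
    hf.stronglyMeasurable hZ hZm₂ hZ_int hfZ_int hZ_mean⟩

lemma ae_condDistrib_mul_mean_eq_of_indepFun_residual (hR : Measurable R) (hG₁ : Measurable G₁)
    (hG₂ : Measurable G₂) (hRG : IndepFun R (fun ω => (G₁ ω, G₂ ω)) μ)
    (hZG₂ : IndepFun (fun ω => G₁ ω - c * G₂ ω) G₂ μ)
    (hZ_int : Integrable (fun ω => G₁ ω - c * G₂ ω) μ)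
    (hZ_mean : ∫ ω, (G₁ ω - c * G₂ ω) ∂μ = 0) (hC : C ≠ ∞) (hG₂C : μ.map G₂ ≤ C • volume) :
    ∀ᵐ y ∂μ.map (fun ω => R ω * G₂ ω),
      Integrable (fun x => x) (condDistrib (fun ω => R ω * G₁ ω) (fun ω => R ω * G₂ ω) μ y) ∧
      ∫ x, x ∂condDistrib (fun ω => R ω * G₁ ω) (fun ω => R ω * G₂ ω) μ y = c * y := by
  have hZ : Measurable fun ω => G₁ ω - c * G₂ ω := hG₁.sub (hG₂.const_mul c)
  have hRG₂ : IndepFun R G₂ μ := hRG.comp measurable_id measurable_snd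
  have hZG₂R : IndepFun (fun ω => (G₁ ω - c * G₂ ω, G₂ ω)) R μ :=
    (hRG.comp (ψ := fun p : ℝ × ℝ => (p.1 - c * p.2, p.2)) measurable_id (by fun_prop)).symm
  have hZ_indep : IndepFun (fun ω => G₁ ω - c * G₂ ω) (fun ω => (G₂ ω, R ω)) μ :=
    indepFun_prodMk_right_of_prodMk_left hZ.aemeasurable hG₂.aemeasurable hR.aemeasurable hZG₂ hZG₂R
  have h_residual : (fun ω => R ω * G₁ ω - c * (R ω * G₂ ω)) =
      fun ω => R ω * (G₁ ω - c * G₂ ω) := by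
    ext ω
    ring
  have h_local (n : ℕ) := integrable_and_condExp_indicator_preimage_mul_ae_eq_zero hR hZ hG₂
    hZ_indep hZ_int hZ_mean (measurableSet_spanningSets volume n) <|
    integrable_indicator_preimage_mul_of_indepFun hR hG₂ hRG₂ hC hG₂C
      (measurableSet_spanningSets volume n) (measure_spanningSets_lt_top volume n).ne
  refine ae_condDistrib_mean_eq_of_forall_condExp_indicator (g := (c * ·))
    (hR.mul hG₁).aemeasurable (hR.mul hG₂) (measurable_const_mul c)
    (measurableSet_spanningSets volume) (iUnion_spanningSets volume) (fun n => ?_) fun n => ?_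
  · rw [h_residual]
    exact (h_local n).1
  · rw [h_residual]
    exact (h_local n).2

lemma ae_condDistrib_mul_mean_eq_of_hasGaussianLaw (hR : Measurable R) (hG₁ : Measurable G₁)
    (hG₂ : Measurable G₂) (hRG : IndepFun R (fun ω => (G₁ ω, G₂ ω)) μ)
    (hG : HasGaussianLaw (fun ω => (G₁ ω, G₂ ω)) μ) (hG₁_mean : μ[G₁] = 0) (hG₂_mean : μ[G₂] = 0)
    (hG₂_var : Var[G₂; μ] ≠ 0) :
    ∀ᵐ y ∂μ.map (fun ω => R ω * G₂ ω),
      Integrable (fun x => x) (condDistrib (fun ω => R ω * G₁ ω) (fun ω => R ω * G₂ ω) μ y) ∧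
      ∫ x, x ∂condDistrib (fun ω => R ω * G₁ ω) (fun ω => R ω * G₂ ω) μ y =
        cov[G₁, G₂; μ] / Var[G₂; μ] * y := by
  set c := cov[G₁, G₂; μ] / Var[G₂; μ] with hc
  have hcG₂ : MemLp (fun ω => c * G₂ ω) 2 μ := hG.snd.memLp_two.const_mul c
  have hZ_cov : cov[fun ω => G₁ ω - c * G₂ ω, G₂; μ] = 0 := by
    rw [covariance_fun_sub_left hG.fst.memLp_two hcG₂ hG.snd.memLp_two, covariance_const_mul_left,
      covariance_self hG₂.aemeasurable, hc, div_mul_cancel₀ _ hG₂_var, sub_self]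
  have hZG₂ : HasGaussianLaw (fun ω => (G₁ ω - c * G₂ ω, G₂ ω)) μ :=
    hG.map_fun ((ContinuousLinearMap.fst ℝ ℝ ℝ - c • ContinuousLinearMap.snd ℝ ℝ ℝ).prod
      (ContinuousLinearMap.snd ℝ ℝ ℝ))
  have hZ_mean : ∫ ω, (G₁ ω - c * G₂ ω) ∂μ = 0 := by
    rw [integral_sub hG.fst.integrable (hG.snd.integrable.const_mul c), integral_const_mul,
      hG₁_mean, hG₂_mean, mul_zero, sub_zero]
  have hG₂_var' : Var[G₂; μ].toNNReal ≠ 0 :=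
    (Real.toNNReal_pos.2 ((variance_nonneg G₂ μ).lt_of_ne' hG₂_var)).ne'
  have hG₂_le : μ.map G₂ ≤ _ • volume :=
    hG.snd.map_eq_gaussianReal.trans_le (gaussianReal_le_smul_volume _ hG₂_var')
  exact ae_condDistrib_mul_mean_eq_of_indepFun_residual hR hG₁ hG₂ hRG
    (hZG₂.indepFun_of_covariance_eq_zero hZ_cov) hZG₂.fst.integrable hZ_mean
    ENNReal.ofReal_ne_top hG₂_le

end

end

section

variable {Ω : Type*} [MeasurableSpace Ω] {μ : Measure Ω}

lemma nonneg_of_charFun_eq_cexp_neg_sq {ν : Measure ℝ} [IsProbabilityMeasure ν] {q : ℝ}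
    (hν : ∀ t, charFun ν t = Complex.exp (-((q * t ^ 2 / 2 : ℝ) : ℂ))) : 0 ≤ q := by
  have h_norm : ‖charFun ν 1‖ ≤ 1 := norm_charFun_le_one 1
  rw [hν, ← Complex.ofReal_neg, Complex.norm_exp_ofReal, Real.exp_le_one_iff] at h_norm
  linarith

lemma hasGaussianLaw_centered_of_charFun [IsProbabilityMeasure μ] {W : Ω → ℝ} {q : ℝ}
    (hW : AEMeasurable W μ)
    (h_charFun : ∀ t, charFun (μ.map W) t = Complex.exp (-((q * t ^ 2 / 2 : ℝ) : ℂ))) :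
    HasGaussianLaw W μ ∧ μ[W] = 0 ∧ Var[W; μ] = q := by
  have := Measure.isProbabilityMeasure_map hW
  have hq : (q.toNNReal : ℝ) = q := Real.coe_toNNReal q (nonneg_of_charFun_eq_cexp_neg_sq h_charFun)
  have hW_law : HasLaw W (gaussianReal 0 q.toNNReal) μ := by
    refine ⟨hW, Measure.ext_of_charFun (funext fun t => ?_)⟩
    rw [h_charFun, charFun_gaussianReal, hq]
    push_cast
    ring_nf
  exact ⟨hW_law.hasGaussianLaw, hW_law.integral_eq.trans integral_id_gaussianReal,
    hW_law.variance_eq.trans (variance_id_gaussianReal.trans hq)⟩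

lemma hasGaussianLaw_prodMk_of_forall_linearCombination {G₁ G₂ : Ω → ℝ} (hG₁ : AEMeasurable G₁ μ)
    (hG₂ : AEMeasurable G₂ μ) (hG : ∀ a b : ℝ, HasGaussianLaw (fun ω => a * G₁ ω + b * G₂ ω) μ) :
    HasGaussianLaw (fun ω => (G₁ ω, G₂ ω)) μ := by
  refine ⟨isGaussian_of_isGaussian_map fun L => ?_⟩
  have hL : L ∘ (fun ω => (G₁ ω, G₂ ω)) = fun ω => L (1, 0) * G₁ ω + L (0, 1) * G₂ ω := by
    ext ω
    rw [mul_comm, mul_comm _ (G₂ ω), ← smul_eq_mul, ← smul_eq_mul, ← map_smul, ← map_smul,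
      ← map_add]
    simp
  rw [AEMeasurable.map_map_of_aemeasurable (by fun_prop) (hG₁.prodMk hG₂), hL]
  exact (hG _ _).isGaussian_map

lemma hasGaussianLaw_prodMk_of_charFun [IsProbabilityMeasure μ] {G₁ G₂ : Ω → ℝ} {v₁ k v₂ : ℝ}
    (hG₁ : AEMeasurable G₁ μ) (hG₂ : AEMeasurable G₂ μ)
    (hG : ∀ t s : ℝ, ∫ ω, Complex.exp (((t * G₁ ω + s * G₂ ω : ℝ) : ℂ) * Complex.I) ∂μ =
      Complex.exp (-(((v₁ * t ^ 2 + 2 * k * t * s + v₂ * s ^ 2) / 2 : ℝ) : ℂ))) :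
    HasGaussianLaw (fun ω => (G₁ ω, G₂ ω)) μ ∧ μ[G₁] = 0 ∧ μ[G₂] = 0 ∧
      cov[G₁, G₂; μ] = k ∧ Var[G₂; μ] = v₂ := by
  have h_comb (a b : ℝ) : HasGaussianLaw (fun ω => a * G₁ ω + b * G₂ ω) μ ∧
      ∫ ω, (a * G₁ ω + b * G₂ ω) ∂μ = 0 ∧
      Var[fun ω => a * G₁ ω + b * G₂ ω; μ] = v₁ * a ^ 2 + 2 * k * a * b + v₂ * b ^ 2 := by
    refine hasGaussianLaw_centered_of_charFun (by fun_prop) fun t => ?_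
    rw [charFun_apply_real, integral_map (by fun_prop) (by fun_prop)]
    convert! hG (t * a) (t * b) using 4
    · push_cast
      ring_nf
    · ring_nf
  obtain ⟨-, hG₁_mean, hG₁_var⟩ := h_comb 1 0
  obtain ⟨-, hG₂_mean, hG₂_var⟩ := h_comb 0 1
  obtain ⟨-, -, h_sum_var⟩ := h_comb 1 1
  have hG_pair : HasGaussianLaw (fun ω => (G₁ ω, G₂ ω)) μ :=
    hasGaussianLaw_prodMk_of_forall_linearCombination hG₁ hG₂ fun a b => (h_comb a b).1
  simp only [one_mul, zero_mul, add_zero, zero_add]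
    at hG₁_mean hG₁_var hG₂_mean hG₂_var h_sum_var
  rw [variance_fun_add hG_pair.fst.memLp_two hG_pair.snd.memLp_two] at h_sum_var
  refine ⟨hG_pair, hG₁_mean, hG₂_mean, ?_, ?_⟩ <;> linarith

end

theorem subGaussian_condMean_linear_general
    {Ω : Type*} [MeasurableSpace Ω] {μ : Measure Ω} [IsProbabilityMeasure μ]
    (ρ σ₁ σ₂ : ℝ) (hσ₂ : σ₂ ≠ 0)
    (R G₁ G₂ : Ω → ℝ) (hR : Measurable R) (hG₁ : Measurable G₁) (hG₂ : Measurable G₂)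
    (hGauss : ∀ t s : ℝ, ∫ ω, Complex.exp (((t * G₁ ω + s * G₂ ω : ℝ) : ℂ) * Complex.I) ∂μ
      = Complex.exp (-(((σ₁ ^ 2 * t ^ 2 + 2 * ρ * σ₁ * σ₂ * t * s + σ₂ ^ 2 * s ^ 2) / 2 : ℝ) : ℂ)))
    (hindep : IndepFun R (fun ω => (G₁ ω, G₂ ω)) μ)
    (X Y : Ω → ℝ) (hX : X = fun ω => R ω * G₁ ω) (hY : Y = fun ω => R ω * G₂ ω) :
    ∀ᵐ y ∂(μ.map Y),
      Integrable (fun x => x) (condDistrib X Y μ y) ∧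
      ∫ x, x ∂(condDistrib X Y μ y) = (ρ * σ₁ / σ₂) * y := by
  subst hX hY
  obtain ⟨hG, hG₁_mean, hG₂_mean, hG_cov, hG₂_var⟩ :=
    hasGaussianLaw_prodMk_of_charFun (k := ρ * σ₁ * σ₂) hG₁.aemeasurable hG₂.aemeasurable
      (by simpa only [← mul_assoc] using hGauss)
  have h_coeff : ρ * σ₁ / σ₂ = cov[G₁, G₂; μ] / Var[G₂; μ] := by
    rw [hG_cov, hG₂_var]
    field_simp
  rw [h_coeff]
  exact ae_condDistrib_mul_mean_eq_of_hasGaussianLaw hR hG₁ hG₂ hindep hG hG₁_mean hG₂_mean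
    (hG₂_var.trans_ne (pow_ne_zero 2 hσ₂))

/-- Linearity of the conditional mean in the sub-Gaussian SαS model `X = √A·G₁`,
`Y = √A·G₂`: for almost every `y`, the conditional mean of `X` given `Y = y` exists
and equals `(ρσ₁/σ₂)·y`. -/
theorem subGaussian_condMean_linear
    {Ω : Type*} [MeasurableSpace Ω] {μ : Measure Ω} [IsProbabilityMeasure μ]
    (α ρ σ₁ σ₂ : ℝ) (hα : α ∈ Set.Ioo (0 : ℝ) 2)
    (hσ₁ : 0 < σ₁) (hσ₂ : 0 < σ₂) (hρ : |ρ| ≤ 1)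
    (A G₁ G₂ : Ω → ℝ) (hA : Measurable A) (hG₁ : Measurable G₁) (hG₂ : Measurable G₂)
    (hApos : ∀ ω, 0 ≤ A ω)
    (hLaplace : ∀ u : ℝ, 0 ≤ u → ∫ ω, Real.exp (-u * A ω) ∂μ
      = Real.exp (-(Real.cos (π * α / 4) ^ (2 / α) * u) ^ (α / 2)))
    (hGauss : ∀ t s : ℝ, ∫ ω, Complex.exp (((t * G₁ ω + s * G₂ ω : ℝ) : ℂ) * Complex.I) ∂μ
      = Complex.exp (-(((σ₁ ^ 2 * t ^ 2 + 2 * ρ * σ₁ * σ₂ * t * s + σ₂ ^ 2 * s ^ 2) / 2 : ℝ) : ℂ)))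
    (hindep : IndepFun A (fun ω => (G₁ ω, G₂ ω)) μ)
    (X Y : Ω → ℝ) (hX : X = fun ω => Real.sqrt (A ω) * G₁ ω)
    (hY : Y = fun ω => Real.sqrt (A ω) * G₂ ω) :
    ∀ᵐ y ∂(μ.map Y),
      Integrable (fun x => x) (condDistrib X Y μ y) ∧
      ∫ x, x ∂(condDistrib X Y μ y) = (ρ * σ₁ / σ₂) * y := by
  exact subGaussian_condMean_linear_general ρ σ₁ σ₂ hσ₂.ne' (fun ω => √(A ω)) G₁ G₂ hA.sqrt hG₁ hG₂
    hGauss (hindep.comp measurable_id.sqrt measurable_id) X Y hX hY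
end
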